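/- arXiv:1201.5260 — 4 statements merged into one kernel-verified Lean document; each statement's English description precedes it below -/
import Mathlib

section
/- Let q be a prime power and let f ∈ F_q[s,u,t] be a polynomial of total degree d ≥ 1 that remains irreducible over the algebraic closure of F_q. Let H ⊂ (F̄_q)^3 be the zero set of f, let Δ ⊂ (F̄_q)^3 be the zero set of D(s,u,t) = (t^2−4)(s^2−4)(s^2+t^2+u^2−ust−4), and assume H ⊄ Δ. Assume moreover that #H(F_q) ≥ q^2/2, where H(F_q) = {(s,u,t) ∈ (F_q)^3 : f(s,u,t) = 0}. Let N = #{(x,y) ∈ SL(2,q) × SL(2,q) : f(tr(x), tr(xy), tr(y)) = 0}. Then N = #H(F_q)·q^3·(1 + r_2) for some real number r_2 with |r_2| ≤ 157d/q. -/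
open Matrix Polynomial

abbrev SL2 (K : Type) [CommRing K] : Type := Matrix.SpecialLinearGroup (Fin 2) K

abbrev PSL2 (K : Type) [CommRing K] : Type := SL2 K ⧸ Subgroup.center (SL2 K)

/-- Evaluation of a word `w ∈ F₂` at a pair of group elements. -/
def wordEval {G : Type*} [Group G] (w : FreeGroup (Fin 2)) (g₁ g₂ : G) : G :=
  (FreeGroup.lift ![g₁, g₂]) w

/-- The word map `P_{w,G} : G × G → G` for `G = SL(2,K)`. -/
def wordMap (w : FreeGroup (Fin 2)) (K : Type) [CommRing K] :
    SL2 K × SL2 K → SL2 K := fun g => wordEval w g.1 g.2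

/-- The point `(tr x, tr xy, tr y)`. -/
def trPoint {K : Type} [CommRing K] (x y : SL2 K) : Fin 3 → K :=
  ![Matrix.trace (x : Matrix (Fin 2) (Fin 2) K),
    Matrix.trace ((x * y : SL2 K) : Matrix (Fin 2) (Fin 2) K),
    Matrix.trace (y : Matrix (Fin 2) (Fin 2) K)]

/-- `f ∈ ℤ[s,u,t]` is the trace polynomial of the word `w`. -/
def IsTracePolynomial (w : FreeGroup (Fin 2)) (f : MvPolynomial (Fin 3) ℤ) : Prop :=
  ∀ (K : Type) [CommRing K], ∀ x y : SL2 K,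
    Matrix.trace ((wordEval w x y : SL2 K) : Matrix (Fin 2) (Fin 2) K) =
      MvPolynomial.eval (trPoint x y) (MvPolynomial.map (Int.castRingHom K) f)

/-- `f : X → Y` is `ε`-equidistributed. -/
def IsEquidistributed {X Y : Type*} (f : X → Y) (ε : ℝ) : Prop :=
  ∃ Y' : Set Y,
    (1 - ε) * (Nat.card Y) < (Nat.card Y' : ℝ) ∧
    ∀ y ∈ Y',
      |(Nat.card {x : X // f x = y} : ℝ) - (Nat.card X : ℝ) / (Nat.card Y)| <
        ε * (Nat.card X) / (Nat.card Y)

/-- The family of word maps on `SL(2,p^n)` is `p`-equidistributed. -/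
def IsPEquidistributed (w : FreeGroup (Fin 2)) (p : ℕ) (hp : p.Prime) : Prop :=
  letI : Fact p.Prime := ⟨hp⟩
  ∃ ε : ℕ → ℝ,
    Filter.Tendsto (fun n : ℕ => ε (p ^ n)) Filter.atTop (nhds 0) ∧
    ∀ᶠ n : ℕ in Filter.atTop,
      IsEquidistributed (wordMap w (GaloisField p n)) (ε (p ^ n))

/-- The family of word maps on `SL(2,q)`, `q` ranging over all prime powers,
is equidistributed. -/
def IsEquidistributedFamily (w : FreeGroup (Fin 2)) : Prop :=
  ∃ ε : ℕ → ℝ,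
    Filter.Tendsto ε Filter.atTop (nhds 0) ∧
    ∀ (p : ℕ) (hp : p.Prime),
      letI : Fact p.Prime := ⟨hp⟩
      ∀ᶠ n : ℕ in Filter.atTop,
        IsEquidistributed (wordMap w (GaloisField p n)) (ε (p ^ n))

/-- Reduction of an integral polynomial mod `p`. -/
noncomputable def reduceMod (p : ℕ) (P : MvPolynomial (Fin 3) ℤ) : MvPolynomial (Fin 3) (ZMod p) :=
  MvPolynomial.map (Int.castRingHom (ZMod p)) P

/-- `P = h ∘ Q` with `deg Q ≥ 1`, `deg h ≥ 2`. -/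
def IsCompositePoly (F : Type) [CommRing F] (P : MvPolynomial (Fin 3) F) : Prop :=
  ∃ (Q : MvPolynomial (Fin 3) F) (h : Polynomial F),
    1 ≤ Q.totalDegree ∧ 2 ≤ h.natDegree ∧ P = Polynomial.aeval Q h

def IsPComposite (p : ℕ) (P : MvPolynomial (Fin 3) ℤ) : Prop :=
  IsCompositePoly (ZMod p) (reduceMod p P)

/-- `h` is a permutation polynomial of every finite extension of `F_p`. -/
def IsPermAllExt (p : ℕ) (h : Polynomial (ZMod p)) : Prop :=
  ∀ (K : Type) [Field K] [Algebra (ZMod p) K] [Finite K],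
    Function.Bijective fun z : K => Polynomial.aeval z h

def IsPSpecial (p : ℕ) (P : MvPolynomial (Fin 3) ℤ) : Prop :=
  IsPComposite p P ∧
    ∃ (Q : MvPolynomial (Fin 3) (ZMod p)) (h : Polynomial (ZMod p)),
      1 ≤ Q.totalDegree ∧ 2 ≤ h.natDegree ∧
      reduceMod p P = Polynomial.aeval Q h ∧ IsPermAllExt p h

def AlmostNoncomposite (P : MvPolynomial (Fin 3) ℤ) : Prop :=
  ∀ p : ℕ, p.Prime → ¬ IsPComposite p P ∨ IsPSpecial p P

/-- The reduced word `x^{a₁}y^{b₁} ⋯ x^{a_r}y^{b_r}`. -/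
def wordOf {r : ℕ} (a b : Fin r → ℤ) : FreeGroup (Fin 2) :=
  (List.ofFn fun i : Fin r =>
    FreeGroup.of (0 : Fin 2) ^ a i * FreeGroup.of (1 : Fin 2) ^ b i).prod


set_option linter.unusedSectionVars false

section
variable {K : Type} [Field K] [Fintype K] [DecidableEq K]

def conicQ (s u t e g : K) : K := e^2 + s*e*g + g^2 - t*e + (u - s*t)*g + 1

theorem conic_disc (s u t e g : K) :
    s^2+t^2+u^2-s*u*t-4 = (2*e+s*g-t)^2 + (s*e+2*g+(u-s*t))^2 - s*(2*e+s*g-t)*(s*e+2*g+(u-s*t))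
      + (s^2-4)*conicQ s u t e g := by
  unfold conicQ; ring

theorem quad_card (b c : K) : (Finset.univ.filter fun e : K => e^2+b*e+c = 0).card ≤ 2 := by
  by_cases h : ∃ r : K, r^2+b*r+c = 0
  · obtain ⟨r, hr⟩ := h
    refine (Finset.card_le_card (t := {r, -b-r}) ?_).trans Finset.card_le_two
    intro e he
    simp only [Finset.mem_filter, Finset.mem_univ, true_and] at he
    have : (e - r) * (e - (-b-r)) = 0 := by linear_combination he - hr
    rcases mul_eq_zero.1 this with h | h
    · simp [sub_eq_zero.1 h]
    · simp [sub_eq_zero.1 h]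
  · push Not at h
    rw [Finset.filter_false_of_mem (fun x _ => h x)]; simp

def conicSet (s u t : K) : Finset (K × K) := Finset.univ.filter fun p => conicQ s u t p.1 p.2 = 0

theorem mem_conicSet (s u t : K) (p : K × K) : p ∈ conicSet s u t ↔ conicQ s u t p.1 p.2 = 0 := by
  simp [conicSet]

theorem conic_slice (s u t g : K) : ((conicSet s u t).filter fun p => p.2 = g).card ≤ 2 := by
  refine le_trans (Finset.card_le_card_of_injOn Prod.fst ?_ ?_) (quad_card (s*g-t) (g^2+(u-s*t)*g+1))
  · rintro ⟨e, g'⟩ h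
    simp only [Finset.mem_coe, Finset.mem_filter, mem_conicSet, Finset.mem_univ, true_and] at h ⊢
    unfold conicQ at h
    obtain ⟨h, rfl⟩ := h
    linear_combination h
  · rintro ⟨e, g'⟩ h ⟨e', g''⟩ h' h2
    simp only [Finset.mem_coe, Finset.mem_filter] at h h' h2
    ext
    · exact h2
    · simp [h.2, h'.2]

theorem conic_le (s u t : K) : (conicSet s u t).card ≤ 2 * Fintype.card K := by
  refine Finset.card_le_mul_card_image_of_maps_to (f := Prod.snd) (t := Finset.univ) (by simp) 2 ?_
  intro g _
  exact conic_slice s u t g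

theorem conic_exists (s u t : K) (hs : s^2-4 ≠ 0) : ∃ e g, conicQ s u t e g = 0 := by
  by_cases h2 : ringChar K = 2
  · have : CharP K 2 := h2 ▸ ringChar.charP K
    have h20 : (2:K) = 0 := CharTwo.two_eq_zero
    have hs0 : s ≠ 0 := by
      rintro rfl; apply hs; linear_combination (-2:K)*h20
    obtain ⟨r, hr⟩ := FiniteField.isSquare_of_char_two h2 (-((t/s)^2+(u-s*t)*(t/s)+1))
    refine ⟨r, t/s, ?_⟩
    unfold conicQ
    have : s*(t/s) = t := by field_simp
    linear_combination -hr + r*this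
  · have h20 : (2:K) ≠ 0 := Ring.two_ne_zero h2
    obtain ⟨a, b, hab⟩ := FiniteField.exists_root_sum_quadratic (f := (X^2 : K[X]))
      (g := C (4-s^2) * X^2 + C (4*(u-s*t)+2*s*t) * X + C (4 - t^2))
      (by simp) (Polynomial.degree_quadratic (by intro h; apply hs; linear_combination -h))
      (FiniteField.odd_card_of_char_ne_two h2)
    simp at hab
    refine ⟨(a - s*b+t)/2, b, ?_⟩
    unfold conicQ
    field_simp
    linear_combination hab

theorem conic_bounds (s u t : K) (hs : s^2-4 ≠ 0) (hM : s^2+t^2+u^2-s*u*t-4 ≠ 0) :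
    (conicSet s u t).card ≤ Fintype.card K + 2 ∧ Fintype.card K ≤ (conicSet s u t).card + 3 := by
  obtain ⟨e0, g0, h0⟩ := conic_exists s u t hs
  have hd := conic_disc s u t e0 g0
  rw [h0] at hd
  obtain ⟨α, hα⟩ : ∃ α, α = 2*e0+s*g0-t := ⟨_, rfl⟩
  obtain ⟨β, hβ⟩ : ∃ β, β = s*e0+2*g0+(u-s*t) := ⟨_, rfl⟩
  rw [← hα, ← hβ] at hd
  have key : ∀ l τ : K, conicQ s u t (e0 + τ*l) (g0+τ) = τ * ((l^2+s*l+1)*τ + (α*l+β)) := by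
    intro l τ
    rw [hα, hβ]; unfold conicQ at *; linear_combination h0
  have nd : ∀ l : K, l^2+s*l+1 = 0 → α*l+β = 0 → False := by
    intro l h1 h2
    apply hM
    rw [hd]
    have : β = -α*l := by linear_combination h2
    rw [this]; linear_combination α^2*h1
  constructor
  · have : conicSet s u t ⊆ ((conicSet s u t).filter fun p => p.2 = g0) ∪
        Finset.univ.image (fun l : K => (e0 - (α*l+β)/(l^2+s*l+1)*l, g0 - (α*l+β)/(l^2+s*l+1))) := by
      rintro ⟨e, g⟩ h
      by_cases hg : g = g0
      · apply Finset.mem_union_left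
        exact Finset.mem_filter.2 ⟨h, hg⟩
      · apply Finset.mem_union_right
        simp only [conicSet, Finset.mem_filter, Finset.mem_univ, true_and] at h
        have hg' : g - g0 ≠ 0 := sub_ne_zero.2 hg
        rw [Finset.mem_image]
        refine ⟨(e-e0)/(g-g0), Finset.mem_univ _, ?_⟩
        have k := key ((e-e0)/(g-g0)) (g-g0)
        rw [mul_div_cancel₀ _ hg', add_sub_cancel, add_sub_cancel, h] at k
        have hN := nd ((e-e0)/(g-g0))
        have hl : (g-g0)*((e-e0)/(g-g0)) = e - e0 := mul_div_cancel₀ _ hg'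
        generalize (e-e0)/(g-g0) = l at *
        have k2 : (l^2+s*l+1)*(g-g0) + (α*l+β) = 0 := by
          rcases mul_eq_zero.1 k.symm with h | h
          · exact absurd h hg'
          · exact h
        have hN' : l^2+s*l+1 ≠ 0 := by
          intro h1
          exact hN h1 (by rw [h1] at k2; linear_combination k2)
        have : (α*l+β)/(l^2+s*l+1) = -(g-g0) := by
          rw [div_eq_iff hN']; linear_combination k2
        rw [this]
        ext
        · simp only; linear_combination hl
        · simp only; ring
    refine (Finset.card_le_card this).trans ((Finset.card_union_le _ _).trans ?_)
    have h1 : ((conicSet s u t).filter fun p => p.2 = g0).card ≤ 2 := conic_slice s u t g0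
    have h2 := Finset.card_image_le (s := (Finset.univ : Finset K)) (f := (fun l : K => (e0 - (α*l+β)/(l^2+s*l+1)*l, g0 - (α*l+β)/(l^2+s*l+1))))
    rw [Finset.card_univ] at h2
    omega
  · have hsplit : (Finset.univ : Finset K) ⊆ (Finset.univ.filter fun l : K => l^2+s*l+1 ≠ 0 ∧ α*l+β ≠ 0) ∪
       ((Finset.univ.filter fun l : K => l^2+s*l+1 = 0) ∪ (Finset.univ.filter fun l : K => α*l+β = 0)) := by
      intro l _
      simp only [Finset.mem_union, Finset.mem_filter, Finset.mem_univ, true_and]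
      tauto
    have c1 := quad_card s (1:K)
    have c2 : (Finset.univ.filter fun l : K => α*l+β = 0).card ≤ 1 := by
      rw [Finset.card_le_one]
      intro a ha b hb
      simp only [Finset.mem_filter, Finset.mem_univ, true_and] at ha hb
      by_cases hz : α = 0
      · exfalso
        apply hM; rw [hd]
        have : β = 0 := by rw [hz] at ha; linear_combination ha
        rw [hz, this]; ring
      · apply mul_left_cancel₀ hz; linear_combination ha - hb
    have c3 : (Finset.univ.filter fun l : K => l^2+s*l+1 ≠ 0 ∧ α*l+β ≠ 0).card ≤ (conicSet s u t).card := by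
      refine Finset.card_le_card_of_injOn (fun l : K => (e0 + -((α*l+β)/(l^2+s*l+1))*l, g0 + -((α*l+β)/(l^2+s*l+1)))) ?_ ?_
      · intro l hl
        simp only [Finset.mem_coe, Finset.mem_filter, Finset.mem_univ, true_and] at hl
        simp only [conicSet, Finset.mem_coe, Finset.mem_filter, Finset.mem_univ, true_and]
        rw [key]
        obtain ⟨h1, h2⟩ := hl
        rw [mul_neg, mul_div_cancel₀ _ h1]; ring
      · intro l hl m hm h
        simp only [Finset.mem_coe, Finset.mem_filter, Finset.mem_univ, true_and] at hl hm
        simp only [Prod.mk.injEq, add_right_inj] at h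
        obtain ⟨h1, h2⟩ := h
        rw [h2] at h1
        exact mul_left_cancel₀ (neg_ne_zero.2 (div_ne_zero hm.2 hm.1)) h1
    have c4 := Finset.card_le_card hsplit
    have c5 := Finset.card_union_le (Finset.univ.filter fun l : K => l^2+s*l+1 ≠ 0 ∧ α*l+β ≠ 0) ((Finset.univ.filter fun l : K => l^2+s*l+1 = 0) ∪ (Finset.univ.filter fun l : K => α*l+β = 0))
    have c6 := Finset.card_union_le (Finset.univ.filter fun l : K => l^2+s*l+1 = 0) (Finset.univ.filter fun l : K => α*l+β = 0)
    rw [Finset.card_univ] at c4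
    omega
end

section
variable {K : Type} [Field K] [Fintype K] [DecidableEq K]

def fibM (x : Matrix (Fin 2) (Fin 2) K) (u t : K) : Finset (Matrix (Fin 2) (Fin 2) K) :=
  Finset.univ.filter fun y => y.det = 1 ∧ y.trace = t ∧ (x * y).trace = u

theorem mem_fibM (x y : Matrix (Fin 2) (Fin 2) K) (u t : K) :
    y ∈ fibM x u t ↔ y.det = 1 ∧ y.trace = t ∧ (x * y).trace = u := by simp [fibM]

theorem fibM_conj (x c g : Matrix (Fin 2) (Fin 2) K) (u t : K) (h : g * x = c * g) (hg : IsUnit g.det) :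
    (fibM x u t).card = (fibM c u t).card := by
  have e1 : g * g⁻¹ = 1 := Matrix.mul_nonsing_inv g hg
  have e2 : g⁻¹ * g = 1 := Matrix.nonsing_inv_mul g hg
  have hx : x = g⁻¹ * c * g := by rw [mul_assoc, ← h, ← mul_assoc, e2, one_mul]
  refine Finset.card_bij' (fun y _ => g * y * g⁻¹) (fun y _ => g⁻¹ * y * g) ?_ ?_ ?_ ?_
  · intro y hy
    rw [mem_fibM] at hy ⊢
    obtain ⟨h1, h2, h3⟩ := hy
    refine ⟨?_, ?_, ?_⟩
    · rw [Matrix.det_mul, Matrix.det_mul, mul_comm, ← mul_assoc, ← Matrix.det_mul, e2]; simp [h1]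
    · rw [Matrix.trace_mul_comm, ← mul_assoc, e2, one_mul, h2]
    · rw [← h3, hx, ← mul_assoc, Matrix.trace_mul_comm]; simp only [mul_assoc]
  · intro y hy
    rw [mem_fibM] at hy ⊢
    obtain ⟨h1, h2, h3⟩ := hy
    refine ⟨?_, ?_, ?_⟩
    · rw [Matrix.det_mul, Matrix.det_mul, mul_comm, ← mul_assoc, ← Matrix.det_mul, e1]; simp [h1]
    · rw [Matrix.trace_mul_comm, ← mul_assoc, e1, one_mul, h2]
    · rw [← h3, hx]
      have : g⁻¹ * c * g * (g⁻¹ * y * g) = g⁻¹ * (c * (g * g⁻¹) * y * g) := by simp only [mul_assoc]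
      rw [this, e1, mul_one, Matrix.trace_mul_comm, mul_assoc, e1, mul_one]
  · intro y _
    have : g⁻¹ * (g * y * g⁻¹) * g = (g⁻¹ * g) * y * (g⁻¹ * g) := by simp only [mul_assoc]
    simp only [this, e2, one_mul, mul_one]
  · intro y _
    have : g * (g⁻¹ * y * g) * g⁻¹ = (g * g⁻¹) * y * (g * g⁻¹) := by simp only [mul_assoc]
    simp only [this, e1, one_mul, mul_one]

theorem fibM_comp (s u t : K) : (fibM !![0, -1; 1, s] u t).card = (conicSet s u t).card := by
  refine Finset.card_bij' (fun y _ => (y 0 0, y 1 0))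
    (fun p _ => !![p.1, u + p.2 - s*(t-p.1); p.2, t - p.1]) ?_ ?_ ?_ ?_
  · intro y hy
    rw [mem_fibM] at hy
    rw [mem_conicSet]
    simp only [Matrix.det_fin_two, Matrix.trace_fin_two, Matrix.mul_apply, Fin.sum_univ_two,
      Matrix.of_apply, Matrix.cons_val', Matrix.cons_val_zero, Matrix.cons_val_one,
      Matrix.cons_val_fin_one] at hy
    obtain ⟨h1, h2, h3⟩ := hy
    unfold conicQ
    have h4 : y 1 1 = t - y 0 0 := by linear_combination h2
    have h5 : y 0 1 = u + y 1 0 - s*(t - y 0 0) := by rw [h4] at h3; linear_combination h3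
    rw [h4, h5] at h1
    linear_combination -h1
  · rintro ⟨e, g⟩ hp
    rw [mem_conicSet] at hp
    rw [mem_fibM]
    unfold conicQ at hp
    simp only [Matrix.det_fin_two, Matrix.trace_fin_two, Matrix.mul_apply, Fin.sum_univ_two,
      Matrix.of_apply, Matrix.cons_val', Matrix.cons_val_zero, Matrix.cons_val_one,
      Matrix.cons_val_fin_one] at hp ⊢
    refine ⟨?_, ?_, ?_⟩
    · linear_combination -hp
    · ring
    · ring
  · intro y hy
    rw [mem_fibM] at hy
    simp only [Matrix.det_fin_two, Matrix.trace_fin_two, Matrix.mul_apply, Fin.sum_univ_two,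
      Matrix.of_apply, Matrix.cons_val', Matrix.cons_val_zero, Matrix.cons_val_one,
      Matrix.cons_val_fin_one] at hy
    obtain ⟨h1, h2, h3⟩ := hy
    have h4 : y 1 1 = t - y 0 0 := by linear_combination h2
    have h5 : y 0 1 = u + y 1 0 - s*(t - y 0 0) := by rw [h4] at h3; linear_combination h3
    ext i j
    fin_cases i <;> fin_cases j <;> simp [h4, h5]
  · rintro ⟨e, g⟩ hp
    simp

def NS (x : Matrix (Fin 2) (Fin 2) K) : Prop := ¬ (x 0 1 = 0 ∧ x 1 0 = 0 ∧ x 0 0 = x 1 1)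

theorem fibM_NS (x : Matrix (Fin 2) (Fin 2) K) (hx : NS x) (hdet : x.det = 1) (u t : K) :
    (fibM x u t).card = (conicSet x.trace u t).card := by
  rw [← fibM_comp]
  obtain ⟨p, r, h⟩ : ∃ p r : K, p * (p * x 0 1 + r * x 1 1) - r * (p * x 0 0 + r * x 1 0) ≠ 0 := by
    by_contra! hc
    apply hx
    have h1 := hc 1 0
    have h2 := hc 0 1
    have h3 := hc 1 1
    refine ⟨by linear_combination h1, by linear_combination -h2, by linear_combination h1 + h2 - h3⟩
  apply fibM_conj x _ !![p, r; -(p * x 0 0 + r * x 1 0), -(p * x 0 1 + r * x 1 1)]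
  · rw [Matrix.det_fin_two] at hdet
    rw [Matrix.trace_fin_two]
    ext i j
    fin_cases i <;> fin_cases j <;>
      simp [Matrix.mul_apply, Fin.sum_univ_two]
    · linear_combination p * hdet
    · linear_combination r * hdet
  · rw [isUnit_iff_ne_zero, Matrix.det_fin_two]
    intro h0
    apply h
    simp at h0
    linear_combination -h0

theorem sl_card_le (s : K) :
    (Finset.univ.filter fun x : Matrix (Fin 2) (Fin 2) K => x.det = 1 ∧ x.trace = s).card
      ≤ Fintype.card K ^ 2 + Fintype.card K := by
  classical
  set T := (Finset.univ.filter fun x : Matrix (Fin 2) (Fin 2) K => x.det = 1 ∧ x.trace = s) with hT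
  have hmem : ∀ x, x ∈ T ↔ x.det = 1 ∧ x.trace = s := by intro x; simp [hT]
  rw [← Finset.card_filter_add_card_filter_not (s := T) (fun x => x 1 0 = 0)]
  have h1 : (T.filter fun x => x 1 0 = 0).card ≤
      ((Finset.univ.filter fun e : K => e^2+(-s)*e+1 = 0) ×ˢ (Finset.univ : Finset K)).card := by
    refine Finset.card_le_card_of_injOn (fun x => (x 0 0, x 0 1)) ?_ ?_
    · intro x hx
      rw [Finset.mem_coe, Finset.mem_filter, hmem, Matrix.det_fin_two, Matrix.trace_fin_two] at hx
      obtain ⟨⟨h1, h2⟩, h3⟩ := hx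
      simp only [Finset.mem_coe, Finset.mem_product, Finset.mem_filter, Finset.mem_univ, true_and, and_true]
      rw [← h2]; rw [h3] at h1; linear_combination -h1
    · intro x hx y hy h
      rw [Finset.mem_coe, Finset.mem_filter, hmem, Matrix.det_fin_two, Matrix.trace_fin_two] at hx hy
      simp only [Prod.mk.injEq] at h
      ext i j
      fin_cases i <;> fin_cases j <;> simp
      · exact h.1
      · exact h.2
      · rw [hx.2, hy.2]
      · linear_combination hx.1.2 - hy.1.2 - h.1
  have h2 : (T.filter fun x => ¬ x 1 0 = 0).card ≤
      ((Finset.univ : Finset K) ×ˢ (Finset.univ.erase (0:K))).card := by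
    refine Finset.card_le_card_of_injOn (fun x => (x 0 0, x 1 0)) ?_ ?_
    · intro x hx
      rw [Finset.mem_coe, Finset.mem_filter] at hx
      simp [hx.2]
    · intro x hx y hy h
      rw [Finset.mem_coe, Finset.mem_filter, hmem, Matrix.det_fin_two, Matrix.trace_fin_two] at hx hy
      simp only [Prod.mk.injEq] at h
      have h11 : x 1 1 = y 1 1 := by linear_combination hx.1.2 - hy.1.2 - h.1
      ext i j
      fin_cases i <;> fin_cases j <;> simp
      · exact h.1
      · apply mul_right_cancel₀ hx.2
        have a := hx.1.1
        have b := hy.1.1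
        rw [← h.1, ← h.2, ← h11] at b
        linear_combination b - a
      · exact h.2
      · exact h11
  rw [Finset.card_product] at h1 h2
  have := quad_card (-s) (1:K)
  rw [Finset.card_univ] at h1 h2
  rw [Finset.card_erase_of_mem (Finset.mem_univ _), Finset.card_univ] at h2
  obtain ⟨k, hk⟩ : ∃ k, Fintype.card K = k + 1 := ⟨Fintype.card K - 1, by have := Fintype.card_pos (α := K); omega⟩
  have hk' : Fintype.card K - 1 = k := by omega
  rw [hk', hk] at h2
  try rw [hk] at h1
  rw [hk]
  nlinarith

theorem sl_card_ge (s : K) [DecidablePred (NS (K := K))] :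
    Fintype.card K ^ 2 ≤
    (Finset.univ.filter fun x : Matrix (Fin 2) (Fin 2) K => (x.det = 1 ∧ x.trace = s) ∧ NS x).card
       + Fintype.card K := by
  have h2 :
      ((Finset.univ : Finset K) ×ˢ (Finset.univ.erase (0:K))).card ≤
      (Finset.univ.filter fun x : Matrix (Fin 2) (Fin 2) K => (x.det = 1 ∧ x.trace = s) ∧ NS x).card := by
    refine Finset.card_le_card_of_injOn (fun p => !![p.1, (p.1*(s-p.1)-1)/p.2; p.2, s-p.1]) ?_ ?_
    · rintro ⟨a, c⟩ hx
      have hc : c ≠ 0 := by simpa using hx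
      rw [Finset.mem_coe, Finset.mem_filter]
      refine ⟨Finset.mem_univ _, ⟨?_, ?_⟩, ?_⟩
      · simp only [Matrix.det_fin_two, Matrix.of_apply, Matrix.cons_val', Matrix.cons_val_zero, Matrix.cons_val_one,
          Matrix.cons_val_fin_one]
        field_simp; ring
      · simp [Matrix.trace_fin_two]
      · intro h; exact hc (by simpa using h.2.1)
    · rintro ⟨a, c⟩ _ ⟨a', c'⟩ _ h
      have h1 := congrFun (congrFun h 0) 0
      have h2 := congrFun (congrFun h 1) 0
      simp at h1 h2
      simp [h1, h2]
  rw [Finset.card_product, Finset.card_erase_of_mem (Finset.mem_univ _), Finset.card_univ] at h2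
  obtain ⟨k, hk⟩ : ∃ k, Fintype.card K = k + 1 := ⟨Fintype.card K - 1, by have := Fintype.card_pos (α := K); omega⟩
  have hk' : Fintype.card K - 1 = k := by omega
  rw [hk', hk] at h2
  try rw [hk] at h1
  rw [hk]
  nlinarith

theorem scalar_card [DecidablePred (NS (K := K))] :
    (Finset.univ.filter fun x : Matrix (Fin 2) (Fin 2) K => x.det = 1 ∧ ¬ NS x).card ≤ 2 := by
  refine le_trans (Finset.card_le_card_of_injOn (fun x => x 0 0) ?_ ?_) (quad_card (0:K) (-1))
  · intro x hx
    rw [Finset.mem_coe, Finset.mem_filter, Matrix.det_fin_two, NS, not_not] at hx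
    simp only [Finset.mem_coe, Finset.mem_filter, Finset.mem_univ, true_and]
    obtain ⟨_, h1, h2, h3, h4⟩ := hx
    rw [← h4, h2] at h1
    linear_combination h1
  · intro x hx y hy h
    rw [Finset.mem_coe, Finset.mem_filter, Matrix.det_fin_two, NS, not_not] at hx hy
    obtain ⟨_, h1, h2, h3, h4⟩ := hx
    obtain ⟨_, k1, k2, k3, k4⟩ := hy
    simp only at h
    ext i j
    fin_cases i <;> fin_cases j <;> simp
    · exact h
    · rw [h2, k2]
    · rw [h3, k3]
    · rw [← h4, ← k4, h]

/-- the structure of the fibre -/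
theorem fibre_struct (s u t : K) : ∃ m r : ℕ,
    (Finset.univ.filter fun p : Matrix (Fin 2) (Fin 2) K × Matrix (Fin 2) (Fin 2) K =>
      (p.1.det = 1 ∧ p.1.trace = s) ∧ p.2 ∈ fibM p.1 u t).card = m * (conicSet s u t).card + r ∧
    Fintype.card K ^ 2 ≤ m + Fintype.card K ∧ m ≤ Fintype.card K ^ 2 + Fintype.card K ∧
    r ≤ 2 * (Fintype.card K ^ 2 + Fintype.card K) ∧ (s^2 - 4 ≠ 0 → r = 0) := by
  classical
  refine ⟨(Finset.univ.filter fun x : Matrix (Fin 2) (Fin 2) K => (x.det = 1 ∧ x.trace = s) ∧ NS x).card,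
    ∑ x ∈ (Finset.univ.filter fun x : Matrix (Fin 2) (Fin 2) K => (x.det = 1 ∧ x.trace = s) ∧ ¬ NS x), (fibM x u t).card,
    ?_, sl_card_ge s, ?_, ?_, ?_⟩
  · have : (Finset.univ.filter fun p : Matrix (Fin 2) (Fin 2) K × Matrix (Fin 2) (Fin 2) K =>
      (p.1.det = 1 ∧ p.1.trace = s) ∧ p.2 ∈ fibM p.1 u t).card =
      ∑ x ∈ (Finset.univ.filter fun x : Matrix (Fin 2) (Fin 2) K => (x.det = 1 ∧ x.trace = s)), (fibM x u t).card := by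
      rw [← Finset.card_sigma]
      refine Finset.card_bij' (fun p _ => ⟨p.1, p.2⟩) (fun p _ => (p.1, p.2)) ?_ ?_ ?_ ?_
      · intro p hp; simpa using hp
      · intro p hp; simpa using hp
      · intro p hp; rfl
      · intro p hp; rfl
    rw [this, ← Finset.sum_filter_add_sum_filter_not _ (fun x => NS x), Finset.filter_filter, Finset.filter_filter]
    congr 1
    rw [Finset.sum_const_nat]
    intro x hx
    rw [Finset.mem_filter] at hx
    rw [fibM_NS x hx.2.2 hx.2.1.1, hx.2.1.2]
  · refine le_trans (Finset.card_le_card ?_) (sl_card_le s)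
    intro x hx
    rw [Finset.mem_filter] at hx ⊢
    exact ⟨hx.1, hx.2.1⟩
  · refine (Finset.sum_le_card_nsmul _ _ (Fintype.card K ^ 2 + Fintype.card K) ?_).trans ?_
    · intro x _
      refine le_trans (Finset.card_le_card ?_) (sl_card_le t)
      intro y hy
      rw [mem_fibM] at hy
      rw [Finset.mem_filter]
      exact ⟨Finset.mem_univ _, hy.1, hy.2.1⟩
    · rw [smul_eq_mul]
      apply Nat.mul_le_mul_right
      refine le_trans (Finset.card_le_card ?_) (scalar_card (K := K))
      intro x hx
      rw [Finset.mem_filter] at hx ⊢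
      exact ⟨hx.1, hx.2.1.1, hx.2.2⟩
  · intro hs
    apply Finset.sum_eq_zero
    intro x hx
    exfalso
    rw [Finset.mem_filter, Matrix.det_fin_two, Matrix.trace_fin_two, NS, not_not] at hx
    obtain ⟨_, ⟨h1, h2⟩, h3, h4, h5⟩ := hx
    apply hs
    rw [← h2, ← h5]
    rw [h3, ← h5] at h1
    linear_combination 4*h1

theorem fibre_good (s u t : K) (hs : s^2-4 ≠ 0) (hM : s^2+t^2+u^2-s*u*t-4 ≠ 0) :
    |((Finset.univ.filter fun p : Matrix (Fin 2) (Fin 2) K × Matrix (Fin 2) (Fin 2) K =>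
      (p.1.det = 1 ∧ p.1.trace = s) ∧ p.2 ∈ fibM p.1 u t).card : ℝ) - (Fintype.card K : ℝ)^3|
      ≤ 5 * (Fintype.card K : ℝ)^2 := by
  obtain ⟨m, r, h, h1, h2, h3, h4⟩ := fibre_struct s u t
  obtain ⟨c1, c2⟩ := conic_bounds s u t hs hM
  rw [h, h4 hs]
  have hq : 1 ≤ Fintype.card K := Fintype.card_pos
  generalize (conicSet s u t).card = n at *
  generalize Fintype.card K = q at *
  have h1' : (q:ℝ)^2 ≤ m + q := by exact_mod_cast h1
  have h2' : (m:ℝ) ≤ q^2+q := by exact_mod_cast h2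
  have c1' : (n:ℝ) ≤ q+2 := by exact_mod_cast c1
  have c2' : (q:ℝ) ≤ n+3 := by exact_mod_cast c2
  have hq' : (1:ℝ) ≤ q := by exact_mod_cast hq
  have hn : (0:ℝ) ≤ n := by positivity
  have hm : (0:ℝ) ≤ m := by positivity
  push_cast
  rw [abs_le]
  constructor
  · have : ((q:ℝ)^2-q)*(q-3) ≤ m * n := by
      have e1 : ((q:ℝ)^2-q)*((q:ℝ)-3) ≤ ((q:ℝ)^2-q)*(n:ℝ) :=
        mul_le_mul_of_nonneg_left (by linarith) (by nlinarith)
      have e2 : ((q:ℝ)^2-q)*(n:ℝ) ≤ (m:ℝ)*(n:ℝ) := mul_le_mul_of_nonneg_right (by linarith) hn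
      linarith
    nlinarith
  · have : (m:ℝ) * n ≤ (q^2+q)*(q+2) := mul_le_mul h2' c1' hn (by positivity)
    nlinarith

theorem fibre_bad (s u t : K) :
    |((Finset.univ.filter fun p : Matrix (Fin 2) (Fin 2) K × Matrix (Fin 2) (Fin 2) K =>
      (p.1.det = 1 ∧ p.1.trace = s) ∧ p.2 ∈ fibM p.1 u t).card : ℝ) - (Fintype.card K : ℝ)^3|
      ≤ 5 * (Fintype.card K : ℝ)^3 := by
  obtain ⟨m, r, h, h1, h2, h3, h4⟩ := fibre_struct s u t
  have c1 := conic_le s u t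
  rw [h]
  have hq : 2 ≤ Fintype.card K := Fintype.one_lt_card
  generalize (conicSet s u t).card = n at *
  generalize Fintype.card K = q at *
  have h2' : (m:ℝ) ≤ q^2+q := by exact_mod_cast h2
  have h3' : (r:ℝ) ≤ 2*(q^2+q) := by exact_mod_cast h3
  have c1' : (n:ℝ) ≤ 2*q := by exact_mod_cast c1
  have hq' : (2:ℝ) ≤ q := by exact_mod_cast hq
  have hn : (0:ℝ) ≤ n := by positivity
  have hm : (0:ℝ) ≤ m := by positivity
  have hr : (0:ℝ) ≤ r := by positivity
  push_cast
  have : (m:ℝ) * n ≤ (q^2+q)*(2*q) := mul_le_mul h2' c1' hn (by positivity)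
  have hq3 : (q:ℝ)^2 * 2 ≤ q^3 := by rw [pow_succ _ 2]; gcongr
  have hq2 : (q:ℝ) * 2 ≤ q^2 := by nlinarith
  have : 0 ≤ (m:ℝ) * n := by positivity
  rw [abs_le]
  constructor
  · nlinarith
  · nlinarith
end

section
variable {L : Type} [Field L]

theorem dvd_of_vanish [IsAlgClosed L] (F P : MvPolynomial (Fin 3) L) (hF : Irreducible F)
    (v0 : Fin 3 → L) (h0 : MvPolynomial.eval v0 P = 0)
    (h : ∀ v, MvPolynomial.eval v P = 0 → MvPolynomial.eval v F = 0) : F ∣ P := by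
  have hmem : F ∈ MvPolynomial.vanishingIdeal L (MvPolynomial.zeroLocus L (Ideal.span {P})) := by
    rw [MvPolynomial.mem_vanishingIdeal_iff]
    intro x hx
    rw [MvPolynomial.mem_zeroLocus_iff] at hx
    have := hx P (Ideal.mem_span_singleton_self P)
    rw [MvPolynomial.aeval_eq_eval] at this ⊢
    exact h x this
  rw [MvPolynomial.vanishingIdeal_zeroLocus_eq_radical] at hmem
  obtain ⟨n, hn⟩ := hmem
  rw [Ideal.mem_span_singleton] at hn
  obtain ⟨i, _, hi⟩ := (dvd_prime_pow hF.prime _).1 hn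
  rcases Nat.eq_zero_or_pos i with rfl | hpos
  · exfalso
    rw [pow_zero, associated_one_iff_isUnit] at hi
    have := hi.map (MvPolynomial.eval v0)
    rw [h0] at this
    exact not_isUnit_zero this
  · exact (dvd_pow_self F hpos.ne').trans hi.symm.dvd

open Classical in
theorem sz_bound (p : MvPolynomial (Fin 2) L) (hp : p ≠ 0) (D : ℕ) (hD : p.totalDegree ≤ D)
    (S : Finset L) (hS : S.Nonempty) :
    ((Fintype.piFinset fun _ : Fin 2 => S).filter fun v => MvPolynomial.eval v p = 0).card ≤ D * S.card := by
  have h := MvPolynomial.schwartz_zippel_totalDegree hp S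
  have hS0 : (0 : ℚ≥0) < S.card := by exact_mod_cast hS.card_pos
  rw [div_le_div_iff₀ (by positivity) hS0, pow_two, ← mul_assoc] at h
  have h' := le_of_mul_le_mul_right h hS0
  have h'' : ((Fintype.piFinset fun _ : Fin 2 => S).filter fun v => MvPolynomial.eval v p = 0).card ≤ p.totalDegree * S.card := by
    exact_mod_cast h'
  exact h''.trans (Nat.mul_le_mul_right _ hD)

theorem support_sum_le (F : MvPolynomial (Fin 3) L) (m : Fin 3 →₀ ℕ) (hm : m ∈ F.support) :
    m 0 + m 1 + m 2 ≤ F.totalDegree := by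
  have := MvPolynomial.le_totalDegree hm
  rwa [Finsupp.sum_fintype _ _ (by simp), Fin.sum_univ_three] at this

noncomputable def sliceP (F : MvPolynomial (Fin 3) L) (c : L) : MvPolynomial (Fin 2) L :=
  ∑ m ∈ F.support, MvPolynomial.C (F.coeff m * c ^ m 0) * (MvPolynomial.X 0 ^ m 1 * MvPolynomial.X 1 ^ m 2)

theorem sliceP_eval (F : MvPolynomial (Fin 3) L) (c : L) (a b : L) :
    MvPolynomial.eval ![a, b] (sliceP F c) = MvPolynomial.eval ![c, a, b] F := by
  rw [sliceP, map_sum, MvPolynomial.eval_eq']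
  refine Finset.sum_congr rfl fun m _ => ?_
  simp [Fin.prod_univ_three, mul_assoc]

theorem sliceP_deg (F : MvPolynomial (Fin 3) L) (c : L) : (sliceP F c).totalDegree ≤ F.totalDegree := by
  refine MvPolynomial.totalDegree_finsetSum_le fun m hm => ?_
  have := support_sum_le F m hm
  refine (MvPolynomial.totalDegree_mul _ _).trans ?_
  rw [MvPolynomial.totalDegree_C]
  have h1 := MvPolynomial.totalDegree_mul (MvPolynomial.X 0 ^ m 1 : MvPolynomial (Fin 2) L) (MvPolynomial.X 1 ^ m 2)
  rw [MvPolynomial.totalDegree_X_pow, MvPolynomial.totalDegree_X_pow] at h1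
  omega

noncomputable def parP (F : MvPolynomial (Fin 3) L) : MvPolynomial (Fin 2) L :=
  ∑ m ∈ F.support, MvPolynomial.C (F.coeff m) *
    (((MvPolynomial.X 0 ^ 2 + 1) ^ m 0 * MvPolynomial.X 0 ^ (F.totalDegree - m 0 - m 1)) *
     ((MvPolynomial.X 0 ^ 2 * MvPolynomial.X 1 ^ 2 + 1) ^ m 1 *
     ((MvPolynomial.X 1 ^ 2 + 1) ^ m 2 * MvPolynomial.X 1 ^ (F.totalDegree - m 1 - m 2))))

theorem parP_eval (F : MvPolynomial (Fin 3) L) (a b : L) (ha : a ≠ 0) (hb : b ≠ 0) :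
    MvPolynomial.eval ![a, b] (parP F) = a ^ F.totalDegree * b ^ F.totalDegree *
      MvPolynomial.eval ![a + a⁻¹, a * b + (a*b)⁻¹, b + b⁻¹] F := by
  rw [parP, map_sum, MvPolynomial.eval_eq', Finset.mul_sum]
  refine Finset.sum_congr rfl fun m hm => ?_
  have := support_sum_le F m hm
  obtain ⟨k, hk⟩ : ∃ k, F.totalDegree = m 0 + m 1 + k := ⟨F.totalDegree - (m 0 + m 1), by omega⟩
  obtain ⟨l, hl⟩ : ∃ l, F.totalDegree = m 1 + m 2 + l := ⟨F.totalDegree - (m 1 + m 2), by omega⟩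
  have e1 : F.totalDegree - m 0 - m 1 = k := by omega
  have e2 : F.totalDegree - m 1 - m 2 = l := by omega
  have e3 : a ^ F.totalDegree * b ^ F.totalDegree = (a ^ m 0 * a ^ m 1 * a ^ k) * (b ^ m 1 * b ^ m 2 * b ^ l) := by
    rw [← pow_add, ← pow_add, ← pow_add, ← pow_add, ← hk, ← hl]
  have r1 : a ^ 2 + 1 = a * (a + a⁻¹) := by field_simp
  have r2 : b ^ 2 + 1 = b * (b + b⁻¹) := by field_simp
  have r3 : a ^ 2 * b ^ 2 + 1 = (a * b) * (a * b + (a*b)⁻¹) := by field_simp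
  simp only [map_mul, map_add, map_pow, map_one, MvPolynomial.eval_C, MvPolynomial.eval_X, Fin.prod_univ_three,
    Matrix.cons_val_zero, Matrix.cons_val_one, Matrix.cons_val, e1, e2]
  rw [e3, r1, r2, r3, mul_pow, mul_pow, mul_pow, mul_pow]
  ring

theorem td_sq (p : MvPolynomial (Fin 2) L) (k n : ℕ) (h : p.totalDegree ≤ k) : ((p + 1)^n).totalDegree ≤ n * k := by
  refine (MvPolynomial.totalDegree_pow _ _).trans (Nat.mul_le_mul_left _ ?_)
  refine (MvPolynomial.totalDegree_add _ _).trans ?_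
  simp [h]

theorem parP_deg (F : MvPolynomial (Fin 3) L) : (parP F).totalDegree ≤ 4 * F.totalDegree := by
  refine MvPolynomial.totalDegree_finsetSum_le fun m hm => ?_
  have := support_sum_le F m hm
  have x0 : (MvPolynomial.X 0 ^ 2 : MvPolynomial (Fin 2) L).totalDegree ≤ 2 := (MvPolynomial.totalDegree_X_pow _ _).le
  have x1 : (MvPolynomial.X 1 ^ 2 : MvPolynomial (Fin 2) L).totalDegree ≤ 2 := (MvPolynomial.totalDegree_X_pow _ _).le
  have x2 : (MvPolynomial.X 0 ^ 2 * MvPolynomial.X 1 ^ 2 : MvPolynomial (Fin 2) L).totalDegree ≤ 4 :=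
    (MvPolynomial.totalDegree_mul _ _).trans (by omega)
  have t0 := td_sq _ _ (m 0) x0
  have t1 := td_sq _ _ (m 2) x1
  have t2 := td_sq _ _ (m 1) x2
  refine (MvPolynomial.totalDegree_mul _ _).trans ?_
  rw [MvPolynomial.totalDegree_C, zero_add]
  refine (MvPolynomial.totalDegree_mul _ _).trans ?_
  refine (Nat.add_le_add (MvPolynomial.totalDegree_mul _ _) (MvPolynomial.totalDegree_mul _ _)).trans ?_
  refine (Nat.add_le_add_left (Nat.add_le_add_left (MvPolynomial.totalDegree_mul _ _) _) _).trans ?_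
  rw [MvPolynomial.totalDegree_X_pow, MvPolynomial.totalDegree_X_pow]
  omega

/-- parametrization of the Markov-type surface -/
theorem markov_param [IsAlgClosed L] (s u t : L) (h : s^2+t^2+u^2-s*u*t-4 = 0) :
    ∃ a b : L, a ≠ 0 ∧ b ≠ 0 ∧ s = a + a⁻¹ ∧ t = b + b⁻¹ ∧ u = a*b + (a*b)⁻¹ := by
  have root : ∀ s : L, ∃ a : L, a ≠ 0 ∧ s = a + a⁻¹ := by
    intro s
    obtain ⟨a, ha⟩ := IsAlgClosed.exists_root (Polynomial.C 1 * X^2 + Polynomial.C (-s) * X + Polynomial.C 1 : L[X])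
      (by rw [Polynomial.degree_quadratic one_ne_zero]; norm_num)
    simp [Polynomial.IsRoot] at ha
    have ha0 : a ≠ 0 := by rintro rfl; simp at ha
    refine ⟨a, ha0, ?_⟩
    field_simp
    linear_combination -ha
  obtain ⟨a, ha, hs⟩ := root s
  obtain ⟨b, hb, ht⟩ := root t
  have hf : (u - (a*b+(a*b)⁻¹)) * (u - (a*b⁻¹+(a*b⁻¹)⁻¹)) = 0 := by
    rw [← h, hs, ht]
    field_simp
    ring
  rcases mul_eq_zero.1 hf with h1 | h1
  · exact ⟨a, b, ha, hb, hs, ht, sub_eq_zero.1 h1⟩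
  · exact ⟨a, b⁻¹, ha, inv_ne_zero hb, hs, by rw [inv_inv, ht, add_comm], sub_eq_zero.1 h1⟩

end

section
variable {K : Type} [Field K] [Fintype K] [DecidableEq K]

theorem slice_count (f : MvPolynomial (Fin 3) K)
    (hirr : Irreducible (MvPolynomial.map (algebraMap K (AlgebraicClosure K)) f)) (c : K)
    (v : Fin 3 → AlgebraicClosure K)
    (hv : MvPolynomial.eval v (MvPolynomial.map (algebraMap K (AlgebraicClosure K)) f) = 0)
    (hvc : v 0 ≠ algebraMap K _ c) :
    (Finset.univ.filter fun w : Fin 3 → K => MvPolynomial.eval w f = 0 ∧ w 0 = c).card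
      ≤ f.totalDegree * Fintype.card K := by
  classical
  set φ := algebraMap K (AlgebraicClosure K) with hφ
  set F := MvPolynomial.map φ f with hF
  have hinj : Function.Injective φ := φ.injective
  have hne : sliceP F (φ c) ≠ 0 := by
    intro h0
    have hdvd : F ∣ MvPolynomial.X 0 - MvPolynomial.C (φ c) := by
      refine dvd_of_vanish F _ hirr (fun _ => φ c) (by simp) ?_
      intro w hw
      have hw' : w 0 = φ c := by simpa [sub_eq_zero] using hw
      have := sliceP_eval F (φ c) (w 1) (w 2)
      rw [h0, map_zero] at this
      rw [this]
      congr 2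
      ext i; fin_cases i <;> simp [hw']
    obtain ⟨r, hr⟩ := hdvd
    have := congrArg (MvPolynomial.eval v) hr
    rw [map_mul, hv, zero_mul] at this
    simp [sub_eq_zero] at this
    exact hvc this
  have hdeg : (sliceP F (φ c)).totalDegree ≤ f.totalDegree :=
    (sliceP_deg F _).trans (by rw [hF]; exact Finset.sup_mono (MvPolynomial.support_map_subset _ _))
  have := sz_bound _ hne _ hdeg (Finset.univ.image φ) ⟨φ 0, by simp⟩
  rw [Finset.card_image_of_injective _ hinj, Finset.card_univ] at this
  refine le_trans (Finset.card_le_card_of_injOn (fun w => ![φ (w 1), φ (w 2)]) ?_ ?_) this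
  · intro w hw
    rw [Finset.mem_coe, Finset.mem_filter] at hw
    rw [Finset.mem_coe, Finset.mem_filter]
    refine ⟨?_, ?_⟩
    · rw [Fintype.mem_piFinset]
      intro i; fin_cases i <;> simp
    · rw [sliceP_eval]
      have : (![φ c, φ (w 1), φ (w 2)] : Fin 3 → AlgebraicClosure K) = φ ∘ w := by
        ext i; fin_cases i <;> simp [hw.2.2]
      rw [this, hF, MvPolynomial.eval_map, ← MvPolynomial.eval₂_comp, hw.2.1, map_zero]
  · intro w hw w' hw' h
    rw [Finset.mem_coe, Finset.mem_filter] at hw hw'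
    have h1 := hinj (congrFun h 0)
    have h2 := hinj (congrFun h 1)
    ext i; fin_cases i
    · simp [hw.2.2, hw'.2.2]
    · exact h1
    · exact h2

open Classical in
theorem param_set : ∃ S : Finset (AlgebraicClosure K), S.Nonempty ∧ S.card ≤ 2 * Fintype.card K ∧
    ∀ (s : K) (a : AlgebraicClosure K), a ≠ 0 → algebraMap K _ s = a + a⁻¹ → a ∈ S := by
  set q := Fintype.card K with hq
  have hq2 : 1 < q := Fintype.one_lt_card
  have n1 : (X ^ (q-1) - Polynomial.C 1 : (AlgebraicClosure K)[X]) ≠ 0 := Polynomial.X_pow_sub_C_ne_zero (by omega) _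
  have n2 : (X ^ (q+1) - Polynomial.C 1 : (AlgebraicClosure K)[X]) ≠ 0 := Polynomial.X_pow_sub_C_ne_zero (by omega) _
  have c1 : (X ^ (q-1) - Polynomial.C 1 : (AlgebraicClosure K)[X]).roots.toFinset.card ≤ q - 1 :=
    (Multiset.toFinset_card_le _).trans ((Polynomial.card_roots' _).trans (Polynomial.natDegree_X_pow_sub_C).le)
  have c2 : (X ^ (q+1) - Polynomial.C 1 : (AlgebraicClosure K)[X]).roots.toFinset.card ≤ q + 1 :=
    (Multiset.toFinset_card_le _).trans ((Polynomial.card_roots' _).trans (Polynomial.natDegree_X_pow_sub_C).le)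
  refine ⟨(X ^ (q-1) - Polynomial.C 1 : (AlgebraicClosure K)[X]).roots.toFinset ∪
    (X ^ (q+1) - Polynomial.C 1 : (AlgebraicClosure K)[X]).roots.toFinset, ⟨1, ?_⟩, ?_, ?_⟩
  · rw [Finset.mem_union]; left
    rw [Multiset.mem_toFinset, Polynomial.mem_roots n1]; simp
  · refine (Finset.card_union_le _ _).trans ?_
    omega
  · intro s a ha hs
    have hfr : algebraMap K (AlgebraicClosure K) s = a^q + (a^q)⁻¹ := by
      have h1 := congrArg (FiniteField.frobeniusAlgHom K (AlgebraicClosure K)) hs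
      rw [AlgHom.commutes, map_add, map_inv₀, FiniteField.coe_frobeniusAlgHom] at h1
      exact h1
    have hy : a^q ≠ 0 := pow_ne_zero _ ha
    have hz : (a^q - a) * (a^q * a - 1) = 0 := by
      rw [hs] at hfr
      generalize a^q = y at *
      field_simp at hfr
      linear_combination -hfr
    rw [Finset.mem_union, Multiset.mem_toFinset, Multiset.mem_toFinset, Polynomial.mem_roots n1, Polynomial.mem_roots n2]
    rcases mul_eq_zero.1 hz with h | h
    · left
      have : a ^ (q-1) * a = 1 * a := by
        rw [← pow_succ, Nat.sub_add_cancel hq2.le, one_mul]; exact sub_eq_zero.1 h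
      simp [mul_right_cancel₀ ha this]
    · right
      simp [pow_succ, h]

theorem markov_count (f : MvPolynomial (Fin 3) K)
    (hirr : Irreducible (MvPolynomial.map (algebraMap K (AlgebraicClosure K)) f))
    (v : Fin 3 → AlgebraicClosure K)
    (hv : MvPolynomial.eval v (MvPolynomial.map (algebraMap K (AlgebraicClosure K)) f) = 0)
    (hvM : (v 0)^2 + (v 2)^2 + (v 1)^2 - v 0 * v 1 * v 2 - 4 ≠ 0) :
    (Finset.univ.filter fun w : Fin 3 → K => MvPolynomial.eval w f = 0 ∧
      (w 0)^2 + (w 2)^2 + (w 1)^2 - w 0 * w 1 * w 2 - 4 = 0).card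
      ≤ 8 * f.totalDegree * Fintype.card K := by
  classical
  set φ := algebraMap K (AlgebraicClosure K) with hφ
  set F := MvPolynomial.map φ f with hF
  have hinj : Function.Injective φ := φ.injective
  have hne : parP F ≠ 0 := by
    intro h0
    have hdvd : F ∣ MvPolynomial.X 0 ^ 2 + MvPolynomial.X 2 ^ 2 + MvPolynomial.X 1 ^ 2 -
        MvPolynomial.X 0 * MvPolynomial.X 1 * MvPolynomial.X 2 - MvPolynomial.C 4 := by
      refine dvd_of_vanish F _ hirr (fun _ => 2) ?_ ?_
      · simp; norm_num
      intro w hw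
      have hw' : (w 0)^2 + (w 2)^2 + (w 1)^2 - w 0 * w 1 * w 2 - 4 = 0 := by simpa using hw
      obtain ⟨a, b, ha, hb, e0, e2, e1⟩ := markov_param (w 0) (w 1) (w 2) hw'
      have := parP_eval F a b ha hb
      rw [h0, map_zero, ← e0, ← e1, ← e2] at this
      have h3 := (mul_eq_zero.1 this.symm).resolve_left (mul_ne_zero (pow_ne_zero _ ha) (pow_ne_zero _ hb))
      rw [← h3]
      congr 2
      ext i; fin_cases i <;> simp
    obtain ⟨r, hr⟩ := hdvd
    have := congrArg (MvPolynomial.eval v) hr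
    rw [map_mul, hv, zero_mul] at this
    simp at this
    exact hvM this
  have hdF : F.totalDegree ≤ f.totalDegree := by rw [hF]; exact Finset.sup_mono (MvPolynomial.support_map_subset _ _)
  have hdeg : (parP F).totalDegree ≤ 4 * f.totalDegree :=
    (parP_deg F).trans (by omega)
  obtain ⟨S, hS, hSc, hSm⟩ := param_set (K := K)
  have := sz_bound _ hne _ hdeg S hS
  have hex : ∀ w : Fin 3 → K, MvPolynomial.eval w f = 0 ∧
      (w 0)^2 + (w 2)^2 + (w 1)^2 - w 0 * w 1 * w 2 - 4 = 0 → ∃ p : AlgebraicClosure K × AlgebraicClosure K,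
      (p.1 ≠ 0 ∧ p.2 ≠ 0) ∧ φ (w 0) = p.1 + p.1⁻¹ ∧ φ (w 2) = p.2 + p.2⁻¹ ∧ φ (w 1) = p.1*p.2 + (p.1*p.2)⁻¹ := by
    intro w hw
    obtain ⟨a, b, ha, hb, e0, e2, e1⟩ := markov_param (φ (w 0)) (φ (w 1)) (φ (w 2)) (by
      have := congrArg φ hw.2
      simpa [map_ofNat φ 4] using this)
    exact ⟨(a, b), ⟨ha, hb⟩, e0, e2, e1⟩
  choose! P hP0 hP1 hP2 hP3 using hex
  have hfin : 4 * f.totalDegree * S.card ≤ 8 * f.totalDegree * Fintype.card K := by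
    calc 4 * f.totalDegree * S.card ≤ 4 * f.totalDegree * (2 * Fintype.card K) := Nat.mul_le_mul_left _ hSc
      _ = _ := by ring
  refine le_trans (Finset.card_le_card_of_injOn (fun w => ![(P w).1, (P w).2]) ?_ ?_) (this.trans hfin)
  · intro w hw
    rw [Finset.mem_coe, Finset.mem_filter] at hw
    rw [Finset.mem_coe, Finset.mem_filter]
    replace hw := hw.2
    refine ⟨?_, ?_⟩
    · rw [Fintype.mem_piFinset]
      intro i; fin_cases i
      · exact hSm _ _ (hP0 w hw).1 (hP1 w hw)
      · exact hSm _ _ (hP0 w hw).2 (hP2 w hw)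
    · rw [parP_eval _ _ _ (hP0 w hw).1 (hP0 w hw).2, ← hP1 w hw, ← hP2 w hw, ← hP3 w hw]
      have : (![φ (w 0), φ (w 1), φ (w 2)] : Fin 3 → AlgebraicClosure K) = φ ∘ w := by
        ext i; fin_cases i <;> simp
      rw [this, hF, MvPolynomial.eval_map, ← MvPolynomial.eval₂_comp, hw.1, map_zero, mul_zero]
  · intro w hw w' hw' h
    rw [Finset.mem_coe, Finset.mem_filter] at hw hw'
    replace hw := hw.2
    replace hw' := hw'.2
    have h1 : (P w).1 = (P w').1 := congrFun h 0
    have h2 : (P w).2 = (P w').2 := congrFun h 1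
    ext i; fin_cases i
    · apply hinj; simp only [Fin.zero_eta]; rw [hP1 w hw, hP1 w' hw', h1]
    · apply hinj; simp only [Fin.mk_one]; rw [hP3 w hw, hP3 w' hw', h1, h2]
    · apply hinj; simp only [Fin.reduceFinMk]; rw [hP2 w hw, hP2 w' hw', h2]
end

section
variable {K : Type} [Field K] [Fintype K] [DecidableEq K]

theorem total_count (f : MvPolynomial (Fin 3) K) :
    Nat.card {g : SL2 K × SL2 K // MvPolynomial.eval (trPoint g.1 g.2) f = 0} =
    ∑ v ∈ Finset.univ.filter (fun v : Fin 3 → K => MvPolynomial.eval v f = 0),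
      (Finset.univ.filter fun p : Matrix (Fin 2) (Fin 2) K × Matrix (Fin 2) (Fin 2) K =>
      (p.1.det = 1 ∧ p.1.trace = v 0) ∧ p.2 ∈ fibM p.1 (v 1) (v 2)).card := by
  classical
  set T := Finset.univ.filter fun p : Matrix (Fin 2) (Fin 2) K × Matrix (Fin 2) (Fin 2) K =>
      (p.1.det = 1 ∧ p.2.det = 1) ∧ MvPolynomial.eval ![p.1.trace, (p.1*p.2).trace, p.2.trace] f = 0 with hT
  have hmT : ∀ p, p ∈ T ↔ (p.1.det = 1 ∧ p.2.det = 1) ∧ MvPolynomial.eval ![p.1.trace, (p.1*p.2).trace, p.2.trace] f = 0 := by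
    intro p; simp [hT]
  have e : {g : SL2 K × SL2 K // MvPolynomial.eval (trPoint g.1 g.2) f = 0} ≃ {p // p ∈ T} :=
    { toFun := fun g => ⟨(g.1.1.1, g.1.2.1), (hmT _).2 ⟨⟨g.1.1.2, g.1.2.2⟩, g.2⟩⟩
      invFun := fun p => ⟨(⟨p.1.1, ((hmT _).1 p.2).1.1⟩, ⟨p.1.2, ((hmT _).1 p.2).1.2⟩), ((hmT _).1 p.2).2⟩
      left_inv := fun g => rfl
      right_inv := fun p => rfl }
  rw [Nat.card_congr e, Nat.card_eq_fintype_card, Fintype.card_coe]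
  rw [Finset.card_eq_sum_card_fiberwise (f := fun p => (![p.1.trace, (p.1*p.2).trace, p.2.trace] : Fin 3 → K))
    (t := Finset.univ.filter (fun v : Fin 3 → K => MvPolynomial.eval v f = 0))]
  · refine Finset.sum_congr rfl fun v hv => ?_
    rw [Finset.mem_filter] at hv
    congr 1
    ext p
    rw [Finset.mem_filter, hmT, Finset.mem_filter, mem_fibM]
    constructor
    · rintro ⟨⟨⟨h1, h2⟩, h3⟩, h4⟩
      subst h4
      exact ⟨Finset.mem_univ _, ⟨h1, rfl⟩, h2, rfl, rfl⟩
    · rintro ⟨_, ⟨h1, h2⟩, h3, h4, h5⟩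
      have : (![p.1.trace, (p.1*p.2).trace, p.2.trace] : Fin 3 → K) = v := by
        ext i; fin_cases i
        · exact h2
        · exact h5
        · exact h4
      refine ⟨⟨⟨h1, h3⟩, ?_⟩, this⟩
      rw [this]; exact hv.2
  · intro p hp
    rw [Finset.mem_coe, hmT] at hp
    rw [Finset.mem_coe, Finset.mem_filter]
    exact ⟨Finset.mem_univ _, hp.2⟩

theorem bad_count (f : MvPolynomial (Fin 3) K)
    (hirr : Irreducible (MvPolynomial.map (algebraMap K (AlgebraicClosure K)) f))
    (hHD : ∃ v : Fin 3 → AlgebraicClosure K,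
      MvPolynomial.eval v (MvPolynomial.map (algebraMap K (AlgebraicClosure K)) f) = 0 ∧
      ((v 2) ^ 2 - 4) * ((v 0) ^ 2 - 4) *
        ((v 0) ^ 2 + (v 2) ^ 2 + (v 1) ^ 2 - v 0 * v 1 * v 2 - 4) ≠ 0) :
    ((Finset.univ.filter (fun v : Fin 3 → K => MvPolynomial.eval v f = 0)).filter fun w =>
      ¬ ((w 0)^2 - 4 ≠ 0 ∧ (w 0)^2 + (w 2)^2 + (w 1)^2 - w 0 * w 1 * w 2 - 4 ≠ 0)).card ≤
      10 * f.totalDegree * Fintype.card K := by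
  obtain ⟨v, hv, hD⟩ := hHD
  have hM := right_ne_zero_of_mul hD
  have hs := right_ne_zero_of_mul (left_ne_zero_of_mul hD)
  have b1 := slice_count f hirr 2 v hv (by
    intro h; apply hs; rw [h, map_ofNat]; norm_num)
  have b2 := slice_count f hirr (-2) v hv (by
    intro h; apply hs; rw [h, map_neg, map_ofNat]; norm_num)
  have b3 := markov_count f hirr v hv hM
  refine le_trans (Finset.card_le_card (t :=
    ((Finset.univ.filter fun w : Fin 3 → K => MvPolynomial.eval w f = 0 ∧ w 0 = 2) ∪
    (Finset.univ.filter fun w : Fin 3 → K => MvPolynomial.eval w f = 0 ∧ w 0 = -2)) ∪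
    (Finset.univ.filter fun w : Fin 3 → K => MvPolynomial.eval w f = 0 ∧
      (w 0)^2 + (w 2)^2 + (w 1)^2 - w 0 * w 1 * w 2 - 4 = 0)) ?_) ?_
  · intro w hw
    rw [Finset.mem_filter, Finset.mem_filter, not_and_or, not_not, not_not] at hw
    obtain ⟨⟨_, h0⟩, h1⟩ := hw
    rw [Finset.mem_union, Finset.mem_union, Finset.mem_filter, Finset.mem_filter, Finset.mem_filter]
    rcases h1 with h1 | h1
    · have : (w 0 - 2) * (w 0 + 2) = 0 := by linear_combination h1
      rcases mul_eq_zero.1 this with h | h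
      · exact Or.inl (Or.inl ⟨Finset.mem_univ _, h0, sub_eq_zero.1 h⟩)
      · exact Or.inl (Or.inr ⟨Finset.mem_univ _, h0, by linear_combination h⟩)
    · exact Or.inr ⟨Finset.mem_univ _, h0, h1⟩
  · refine (Finset.card_union_le _ _).trans ?_
    refine (Nat.add_le_add_right (Finset.card_union_le _ _) _).trans ?_
    linarith
end

theorem fibre_count_over_irreducible_hypersurface (K : Type) [Field K] [Fintype K]
    (q : ℕ) (hq : Fintype.card K = q)
    (f : MvPolynomial (Fin 3) K) (d : ℕ) (hd : f.totalDegree = d) (hd1 : 1 ≤ d)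
    (hirr : Irreducible (MvPolynomial.map (algebraMap K (AlgebraicClosure K)) f))
    (hHD : ∃ v : Fin 3 → AlgebraicClosure K,
      MvPolynomial.eval v (MvPolynomial.map (algebraMap K (AlgebraicClosure K)) f) = 0 ∧
      ((v 2) ^ 2 - 4) * ((v 0) ^ 2 - 4) *
        ((v 0) ^ 2 + (v 2) ^ 2 + (v 1) ^ 2 - v 0 * v 1 * v 2 - 4) ≠ 0)
    (hbig : q ^ 2 ≤ 2 * Nat.card {v : Fin 3 → K // MvPolynomial.eval v f = 0}) :
    ∃ r₂ : ℝ, |r₂| ≤ 157 * d / q ∧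
      (Nat.card {g : SL2 K × SL2 K // MvPolynomial.eval (trPoint g.1 g.2) f = 0} : ℝ) =
        (Nat.card {v : Fin 3 → K // MvPolynomial.eval v f = 0} : ℝ) * (q : ℝ) ^ 3 * (1 + r₂) := by
  classical
  subst hq hd
  have hH : Nat.card {v : Fin 3 → K // MvPolynomial.eval v f = 0} =
      (Finset.univ.filter (fun v : Fin 3 → K => MvPolynomial.eval v f = 0)).card :=
    Nat.subtype_card _ (by simp)
  rw [hH] at hbig ⊢
  rw [total_count f]
  have hbad := bad_count f hirr hHD
  set H := Finset.univ.filter (fun v : Fin 3 → K => MvPolynomial.eval v f = 0) with hHdef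
  have hq2 : 2 ≤ Fintype.card K := Fintype.one_lt_card
  set q := Fintype.card K with hqdef
  set d := f.totalDegree with hddef
  have hqR : (2:ℝ) ≤ q := by exact_mod_cast hq2
  have hdR : (1:ℝ) ≤ d := by exact_mod_cast hd1
  have hbigR : (q:ℝ)^2 ≤ 2 * H.card := by exact_mod_cast hbig
  have hHpos : (0:ℝ) < H.card := by nlinarith
  set Fc : (Fin 3 → K) → ℕ := fun v => (Finset.univ.filter fun p : Matrix (Fin 2) (Fin 2) K × Matrix (Fin 2) (Fin 2) K =>
      (p.1.det = 1 ∧ p.1.trace = v 0) ∧ p.2 ∈ fibM p.1 (v 1) (v 2)).card with hFc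
  have hmain : |((∑ v ∈ H, Fc v : ℕ) : ℝ) - H.card * (q:ℝ)^3| ≤ 157 * d * q^2 * H.card := by
    have e1 : ((∑ v ∈ H, Fc v : ℕ) : ℝ) - H.card * (q:ℝ)^3 = ∑ v ∈ H, ((Fc v : ℝ) - (q:ℝ)^3) := by
      rw [Finset.sum_sub_distrib, Finset.sum_const, nsmul_eq_mul]; push_cast; rfl
    rw [e1]
    refine (Finset.abs_sum_le_sum_abs _ _).trans ?_
    rw [← Finset.sum_filter_add_sum_filter_not H (fun w =>
      ((w 0)^2 - 4 ≠ 0 ∧ (w 0)^2 + (w 2)^2 + (w 1)^2 - w 0 * w 1 * w 2 - 4 ≠ 0))]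
    have s1 : ∑ v ∈ H.filter (fun w =>
      ((w 0)^2 - 4 ≠ 0 ∧ (w 0)^2 + (w 2)^2 + (w 1)^2 - w 0 * w 1 * w 2 - 4 ≠ 0)), |(Fc v : ℝ) - (q:ℝ)^3|
        ≤ H.card * (5 * (q:ℝ)^2) := by
      refine (Finset.sum_le_card_nsmul _ _ (5 * (q:ℝ)^2) ?_).trans ?_
      · intro w hw
        rw [Finset.mem_filter] at hw
        exact fibre_good (w 0) (w 1) (w 2) hw.2.1 hw.2.2
      · rw [nsmul_eq_mul]
        gcongr
        exact Finset.filter_subset _ _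
    have s2 : ∑ v ∈ H.filter (fun w =>
      ¬ ((w 0)^2 - 4 ≠ 0 ∧ (w 0)^2 + (w 2)^2 + (w 1)^2 - w 0 * w 1 * w 2 - 4 ≠ 0)), |(Fc v : ℝ) - (q:ℝ)^3|
        ≤ (10 * d * q) * (5 * (q:ℝ)^3) := by
      refine (Finset.sum_le_card_nsmul _ _ (5 * (q:ℝ)^3) ?_).trans ?_
      · intro w hw
        exact fibre_bad (w 0) (w 1) (w 2)
      · rw [nsmul_eq_mul]
        gcongr
        exact_mod_cast hbad
    refine (add_le_add s1 s2).trans ?_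
    have k1 : (d:ℝ) * q^2 * (q:ℝ)^2 ≤ d * q^2 * (2 * H.card) := by gcongr
    have k2 : 1 * ((q:ℝ)^2 * H.card) ≤ d * ((q:ℝ)^2 * H.card) := by gcongr
    have k3 : 0 ≤ (d:ℝ) * ((q:ℝ)^2 * H.card) := by positivity
    nlinarith
  have hq0 : (0:ℝ) < q := by linarith
  refine ⟨((∑ v ∈ H, Fc v : ℕ) : ℝ) / (H.card * (q:ℝ)^3) - 1, ?_, ?_⟩
  · have : ((∑ v ∈ H, Fc v : ℕ) : ℝ) / (H.card * (q:ℝ)^3) - 1 =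
      (((∑ v ∈ H, Fc v : ℕ) : ℝ) - H.card * (q:ℝ)^3) / (H.card * (q:ℝ)^3) := by
      field_simp
    rw [this, abs_div, abs_of_pos (by positivity : (0:ℝ) < H.card * (q:ℝ)^3), div_le_div_iff₀ (by positivity) hq0]
    calc _ ≤ (157 * d * q^2 * H.card) * (q:ℝ) := by gcongr
      _ = _ := by ring
  · field_simp
    ring
end

section
/- Let w = x^{a_1}y^{b_1}···x^{a_r}y^{b_r} be a reduced word of complexity r with A ≠ 0 or B ≠ 0, and let F = ℚ or F = F_p for a prime p. Suppose that over F the trace polynomial decomposes as f_w = h ∘ Q, where Q ∈ F[s,u,t] has deg Q ≥ 1 and h ∈ F[z] has d := deg h ≥ 2. Then d divides both A and B, and over the algebraic closure of F one has h(z) = D_d(ℓ(z)) for some polynomial ℓ of degree one. -/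
open Matrix Polynomial

theorem dk_monic {K : Type} [Field K] (n : ℕ) :
    (dickson 1 (1 : K) (n + 1)).Monic ∧ (dickson 1 (1 : K) (n + 1)).natDegree = n + 1 ∧
      (dickson 1 (1 : K) n).natDegree ≤ n := by
  induction n with
  | zero =>
    refine ⟨by simpa using monic_X, by simp, ?_⟩
    have : dickson 1 (1 : K) 0 = C 2 := by
      rw [dickson_zero]; simp only [Nat.cast_one, map_ofNat]; norm_num
    rw [this]; simp
  | succ n ih =>
    obtain ⟨h1, h2, h3⟩ := ih
    have hX : (X * dickson 1 (1 : K) (n + 1)).Monic := monic_X.mul h1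
    have hXd : (X * dickson 1 (1 : K) (n + 1)).natDegree = n + 1 + 1 := by
      rw [natDegree_X_mul h1.ne_zero, h2]
    have hlt : (dickson 1 (1 : K) n).degree < (X * dickson 1 (1 : K) (n + 1)).degree := by
      rw [degree_eq_natDegree hX.ne_zero, hXd]
      refine lt_of_le_of_lt degree_le_natDegree ?_
      exact_mod_cast (by omega)
    rw [dickson_add_two, map_one, one_mul]
    refine ⟨hX.sub_of_left hlt, ?_, h2.le⟩
    rw [natDegree_eq_of_degree_eq (degree_sub_eq_left_of_degree_lt hlt), hXd]

theorem dk_tame {K : Type} [Field K] (H1 H2 q1 q2 : K[X]) (d n : ℕ) (hd : (d : K) ≠ 0)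
    (hn : 1 ≤ n) (m1 : H1.Monic) (m2 : H2.Monic) (e1 : H1.natDegree = d) (e2 : H2.natDegree = d)
    (k1 : q1.Monic) (k2 : q2.Monic) (g1 : q1.natDegree = n) (g2 : q2.natDegree = n)
    (h : H1.comp q1 = H2.comp q2) : ∃ c, q1 = q2 + C c := by
  have hd0 : d ≠ 0 := by rintro rfl; simp at hd
  set S : ℕ → K[X] := fun i => ∑ j ∈ Finset.range i, q1 ^ j * q2 ^ (i - 1 - j) with hS
  have hSm : ∀ i j, j < i → (q1 ^ j * q2 ^ (i - 1 - j)).Monic ∧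
      (q1 ^ j * q2 ^ (i - 1 - j)).natDegree = (i - 1) * n := by
    intro i j hj
    refine ⟨(k1.pow j).mul (k2.pow _), ?_⟩
    rw [(k1.pow j).natDegree_mul (k2.pow _), k1.natDegree_pow, k2.natDegree_pow, g1, g2, ← add_mul]
    congr 1; omega
  have hSd : (S d).coeff ((d - 1) * n) = d := by
    simp only [hS, finsetSum_coeff]
    rw [Finset.sum_congr rfl (g := fun _ => (1 : K))]
    · simp
    · intro j hj
      obtain ⟨a, b⟩ := hSm d j (Finset.mem_range.1 hj)
      rw [← b]; exact a
  have hSl : ∀ i < d, (S i).coeff ((d - 1) * n) = 0 := by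
    intro i hi
    simp only [hS, finsetSum_coeff]
    refine Finset.sum_eq_zero fun j hj => ?_
    have hj := Finset.mem_range.1 hj
    obtain ⟨a, b⟩ := hSm i j hj
    apply coeff_eq_zero_of_natDegree_lt
    rw [b]
    exact Nat.mul_lt_mul_of_pos_right (by omega) hn
  set T : K[X] := ∑ i ∈ Finset.range (d + 1), C (H1.coeff i) * S i with hT
  have hTc : T.coeff ((d - 1) * n) = d := by
    rw [hT, Finset.sum_range_succ, coeff_add, finsetSum_coeff, Finset.sum_eq_zero, coeff_C_mul, hSd]
    · have : H1.coeff d = 1 := by rw [← e1]; exact m1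
      rw [this]; simp
    · intro i hi
      rw [coeff_C_mul, hSl i (Finset.mem_range.1 hi), mul_zero]
  have key : T * (q1 - q2) = (H2 - H1).comp q2 := by
    rw [sub_comp, ← h, Polynomial.comp, Polynomial.comp, eval₂_eq_sum_range, eval₂_eq_sum_range, e1, hT, Finset.sum_mul,
      ← Finset.sum_sub_distrib]
    refine Finset.sum_congr rfl fun i _ => ?_
    rw [mul_assoc, hS]
    simp only
    rw [(Commute.all q1 q2).geom_sum₂_mul, mul_sub]
  have hT0 : T ≠ 0 := by rintro h0; rw [h0] at hTc; simp at hTc; exact hd hTc.symm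
  have hTn : (d - 1) * n ≤ T.natDegree := le_natDegree_of_ne_zero (by rw [hTc]; exact hd)
  by_cases hδ : q1 - q2 = 0
  · exact ⟨0, by rw [sub_eq_zero.1 hδ]; simp⟩
  have hR : (H2 - H1).natDegree ≤ d - 1 := by
    have : (H2 - H1).degree < H2.degree := degree_sub_lt
      (by rw [degree_eq_natDegree m1.ne_zero, degree_eq_natDegree m2.ne_zero, e1, e2])
      m2.ne_zero (by rw [m1.leadingCoeff, m2.leadingCoeff])
    by_cases h0 : H2 - H1 = 0
    · rw [h0]; simp
    · have := natDegree_lt_natDegree h0 this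
      omega
  have h1 := natDegree_comp_le (p := H2 - H1) (q := q2)
  rw [← key, natDegree_mul hT0 hδ, g2] at h1
  have h2 := Nat.mul_le_mul_right n hR
  have h3 : (q1 - q2).natDegree = 0 := by omega
  refine ⟨(q1 - q2).coeff 0, ?_⟩
  rw [← eq_C_of_natDegree_eq_zero h3]; ring

theorem dk_main {K : Type} [Field K] [IsAlgClosed K] (m : ℕ) : 1 ≤ m → ∀ (h q : K[X]) (d : ℕ),
    h.natDegree = d → h.comp q = dickson 1 (1 : K) m →
    ∃ ℓ : K[X], ℓ.degree = 1 ∧ h = (dickson 1 (1 : K) d).comp ℓ := by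
  induction m using Nat.strong_induction_on with
  | _ m ih =>
  intro hm h q d hd hc
  obtain ⟨Mm, Md, -⟩ := dk_monic (K := K) (m - 1)
  rw [Nat.sub_add_cancel hm] at Mm Md
  have hdn : d * q.natDegree = m := by rw [← Md, ← hc, natDegree_comp, hd]
  have hd0 : 0 < d := Nat.pos_of_ne_zero (by rintro rfl; omega)
  have hq0 : 0 < q.natDegree := Nat.pos_of_ne_zero (by intro h0; rw [h0] at hdn; omega)
  have hinj : ∀ P : K[X], P.comp q = 0 → P = 0 := by
    intro P hP
    by_contra h0
    have h1 : P.natDegree = 0 := by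
      have := natDegree_comp (p := P) (q := q)
      rw [hP, natDegree_zero] at this
      rcases Nat.mul_eq_zero.1 this.symm with h | h
      · exact h
      · omega
    rw [eq_C_of_natDegree_eq_zero h1, C_comp] at hP
    exact h0 (by rw [eq_C_of_natDegree_eq_zero h1, hP])
  by_cases hmK : (m : K) = 0
  · obtain ⟨p, hp⟩ := CharP.exists K
    have hpm : p ∣ m := (CharP.cast_eq_zero_iff K p m).1 hmK
    have hpp : p.Prime := by
      rcases CharP.char_is_prime_or_zero K p with h | h
      · exact h
      · subst h; have := zero_dvd_iff.1 hpm; omega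
    haveI : Fact p.Prime := ⟨hpp⟩
    haveI : ExpChar K p := ExpChar.prime hpp
    haveI : PerfectRing K p := inferInstance
    obtain ⟨k, rfl⟩ := hpm
    have hk : 1 ≤ k := Nat.pos_of_ne_zero (by rintro rfl; omega)
    have hkl : k < p * k := by have := hpp.two_le; nlinarith
    have hD1 : dickson 1 (1 : K) (p * k) = (dickson 1 (1 : K) k) ^ p := by
      rw [dickson_one_one_mul, dickson_one_one_charP K p]; simp
    have hD2 : dickson 1 (1 : K) (p * k) = expand K p (dickson 1 (1 : K) k) := by
      rw [mul_comm, dickson_one_one_mul, dickson_one_one_charP K p, expand_eq_comp_X_pow]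
    have hder : derivative (h.comp q) = 0 := by
      rw [hc, hD1, derivative_pow]; simp
    rw [derivative_comp] at hder
    rcases mul_eq_zero.1 hder with h0 | h0
    · have hqe := expand_contract p h0 hpp.ne_zero
      set q1 := contract p q
      have : expand K p (h.comp q1) = expand K p (dickson 1 (1 : K) k) := by
        rw [← hD2, ← hc, ← hqe, expand_eq_comp_X_pow, expand_eq_comp_X_pow, comp_assoc]
      exact ih k hkl hk h q1 d hd (expand_injective hpp.pos this)
    · have h0 := hinj _ h0
      have hhe := expand_contract p h0 hpp.ne_zero
      rw [polynomial_expand_eq] at hhe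
      set h2 := (contract p h).map ((frobeniusEquiv K p).symm : K →+* K) with hh2
      have h3 : (h2.comp q) ^ p = (dickson 1 (1 : K) k) ^ p := by
        rw [← hD1, ← hc, ← hhe, pow_comp]
      have h4 := frobenius_inj K[X] p h3
      obtain ⟨ℓ, hl, hl2⟩ := ih k hkl hk h2 q _ rfl h4
      refine ⟨ℓ, hl, ?_⟩
      have hd' : d = p * h2.natDegree := by rw [← hd, ← hhe, natDegree_pow]
      rw [hd', dickson_one_one_mul, dickson_one_one_charP, ← hhe, X_pow_comp, pow_comp, ← hl2]
  · have hdK : (d : K) ≠ 0 := by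
      intro h0; apply hmK; rw [← hdn]; push_cast; rw [h0, zero_mul]
    obtain ⟨n, hn⟩ : ∃ n, n = q.natDegree := ⟨_, rfl⟩
    rw [← hn] at hdn hq0
    obtain ⟨Dm, Dd, -⟩ := dk_monic (K := K) (d - 1)
    rw [Nat.sub_add_cancel hd0] at Dm Dd
    obtain ⟨Nm, Nd, -⟩ := dk_monic (K := K) (n - 1)
    rw [Nat.sub_add_cancel hq0] at Nm Nd
    set b := q.leadingCoeff with hb
    have hqne : q ≠ 0 := by rintro rfl; simp at hn; omega
    have hb0 : b ≠ 0 := leadingCoeff_ne_zero.2 hqne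
    have hlin : (C b * X : K[X]).natDegree = 1 := natDegree_C_mul_X b hb0
    have hqn : (C b⁻¹ * q).natDegree = n := by rw [natDegree_C_mul (inv_ne_zero hb0), hn]
    have hqm : (C b⁻¹ * q).Monic := by
      rw [Monic, leadingCoeff_mul, leadingCoeff_C, ← hb, inv_mul_cancel₀ hb0]
    have hcomp : (h.comp (C b * X)).comp (C b⁻¹ * q) = (dickson 1 (1 : K) d).comp (dickson 1 (1 : K) n) := by
      rw [← dickson_one_one_mul, hdn, ← hc, comp_assoc]
      congr 1
      rw [mul_comp, C_comp, X_comp, ← mul_assoc, ← C_mul, mul_inv_cancel₀ hb0]; simp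
    have hHd : (h.comp (C b * X)).natDegree = d := by rw [natDegree_comp, hlin, hd, mul_one]
    have hHm : (h.comp (C b * X)).Monic := by
      have := congrArg leadingCoeff hcomp
      rw [leadingCoeff_comp (p := h.comp (C b * X)) (by omega), hqm.leadingCoeff, one_pow, mul_one,
        leadingCoeff_comp (p := dickson 1 (1 : K) d) (by omega), Dm.leadingCoeff, Nm.leadingCoeff, one_pow, mul_one] at this
      exact this
    obtain ⟨c, hcc⟩ := dk_tame _ _ _ _ d n hdK hq0 hHm Dm hHd Dd hqm Nm hqn Nd hcomp
    have hqq : q = (C b * (X + C c)).comp (dickson 1 (1 : K) n) := by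
      rw [mul_comp, C_comp, add_comp, X_comp, C_comp, ← hcc, ← mul_assoc, ← C_mul,
        mul_inv_cancel₀ hb0]; simp
    have hqX : (C b⁻¹ * X - C c).comp q = dickson 1 (1 : K) n := by
      rw [sub_comp, mul_comp, C_comp, X_comp, C_comp, hcc]; ring
    refine ⟨C b⁻¹ * X - C c, ?_, ?_⟩
    · rw [sub_eq_add_neg, ← C_neg]; exact degree_linear (inv_ne_zero hb0)
    · rw [← sub_eq_zero]
      apply hinj
      rw [sub_comp, comp_assoc, hqX, hc, ← dickson_one_one_mul, hdn, sub_self]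

theorem dk_trace_pow {R : Type} [CommRing R] (M : SL2 R[X])
    (hM : Matrix.trace (M : Matrix (Fin 2) (Fin 2) R[X]) = X) (n : ℕ) :
    Matrix.trace ((M ^ n : SL2 R[X]) : Matrix (Fin 2) (Fin 2) R[X]) = dickson 1 (1 : R) n := by
  induction n using Nat.twoStepInduction with
  | zero => simp; norm_num
  | one => simpa using hM
  | more n h1 h2 =>
    rw [dickson_add_two, ← h1, ← h2, map_one, one_mul, ← hM, pow_succ, pow_succ]
    have hdet := M.det_coe
    rw [Matrix.det_fin_two] at hdet
    simp only [Matrix.SpecialLinearGroup.coe_mul, Matrix.trace_fin_two, Matrix.mul_apply, Fin.sum_univ_two]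
    generalize (M ^ n : SL2 R[X]) = N
    linear_combination (-(N 0 0) - N 1 1) * hdet

theorem dk_trace_zpow {R : Type} [CommRing R] (M : SL2 R[X])
    (hM : Matrix.trace (M : Matrix (Fin 2) (Fin 2) R[X]) = X) (n : ℤ) :
    Matrix.trace ((M ^ n : SL2 R[X]) : Matrix (Fin 2) (Fin 2) R[X]) = dickson 1 (1 : R) n.natAbs := by
  rcases Int.natAbs_eq n with h | h
  · rw [← dk_trace_pow M hM]
    conv_lhs => rw [h, zpow_natCast]
  · rw [← dk_trace_pow M hM]
    conv_lhs => rw [h, _root_.zpow_neg, zpow_natCast]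
    rw [Matrix.SpecialLinearGroup.coe_inv, Matrix.adjugate_fin_two, Matrix.trace_fin_two,
      Matrix.trace_fin_two]
    simp [add_comm]

theorem dk_word_left {G : Type} [Group G] {r : ℕ} (a b : Fin r → ℤ) (g : G) :
    wordEval (wordOf a b) g 1 = g ^ (∑ i, a i) := by
  unfold wordEval wordOf
  rw [map_list_prod, List.map_ofFn]
  induction r with
  | zero => simp
  | succ r ih =>
    rw [List.ofFn_succ, List.prod_cons, Fin.sum_univ_succ, _root_.zpow_add,
      ← ih (fun i => a i.succ) (fun i => b i.succ)]
    simp [Function.comp_def]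

theorem dk_word_right {G : Type} [Group G] {r : ℕ} (a b : Fin r → ℤ) (g : G) :
    wordEval (wordOf a b) 1 g = g ^ (∑ i, b i) := by
  unfold wordEval wordOf
  rw [map_list_prod, List.map_ofFn]
  induction r with
  | zero => simp
  | succ r ih =>
    rw [List.ofFn_succ, List.prod_cons, Fin.sum_univ_succ, _root_.zpow_add,
      ← ih (fun i => a i.succ) (fun i => b i.succ)]
    simp [Function.comp_def]

theorem dk_eval {F : Type} [Field F] (f : MvPolynomial (Fin 3) ℤ) (Q : MvPolynomial (Fin 3) F)
    (h : F[X]) (hdec : MvPolynomial.map (Int.castRingHom F) f = Polynomial.aeval Q h)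
    (v : Fin 3 → F[X]) :
    MvPolynomial.eval v (MvPolynomial.map (Int.castRingHom F[X]) f) =
      h.comp (MvPolynomial.aeval v Q) := by
  have h1 := congrArg (MvPolynomial.aeval v) hdec
  rw [← Polynomial.aeval_algHom_apply] at h1
  rw [Polynomial.comp, ← Polynomial.algebraMap_eq, ← Polynomial.aeval_def, ← h1, MvPolynomial.aeval_def,
    MvPolynomial.eval₂_map, MvPolynomial.eval_map]
  congr 1

theorem dk_final {F : Type} [Field F] (h q : F[X]) (d N : ℕ) (hd : h.natDegree = d) (hN : 1 ≤ N)
    (hc : h.comp q = dickson 1 (1 : F) N) :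
    d ∣ N ∧ ∃ ℓ : Polynomial (AlgebraicClosure F), ℓ.degree = 1 ∧
        h.map (algebraMap F (AlgebraicClosure F)) =
          (Polynomial.dickson 1 (1 : AlgebraicClosure F) d).comp ℓ := by
  obtain ⟨-, Md, -⟩ := dk_monic (K := F) (N - 1)
  rw [Nat.sub_add_cancel hN] at Md
  refine ⟨⟨q.natDegree, by rw [← Md, ← hc, natDegree_comp, hd]⟩, ?_⟩
  refine dk_main N hN _ (q.map (algebraMap F (AlgebraicClosure F))) d
    (by rw [natDegree_map, hd]) ?_
  rw [← Polynomial.map_comp, hc, map_dickson, map_one]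

theorem dickson_head_of_composite_trace_polynomial {r : ℕ}
    (a b : Fin r → ℤ) (hab : ∀ i, a i ≠ 0 ∧ b i ≠ 0)
    (A B : ℤ) (hA : A = ∑ i, a i) (hB : B = ∑ i, b i) (hAB : A ≠ 0 ∨ B ≠ 0)
    (f : MvPolynomial (Fin 3) ℤ) (hf : IsTracePolynomial (wordOf a b) f)
    (F : Type) [Field F]
    (hF : Nonempty (F ≃+* ℚ) ∨ ∃ p : ℕ, p.Prime ∧ Nonempty (F ≃+* ZMod p))
    (Q : MvPolynomial (Fin 3) F) (h : Polynomial F) (d : ℕ)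
    (hQ : 1 ≤ Q.totalDegree) (hd : h.natDegree = d) (hd2 : 2 ≤ d)
    (hdec : MvPolynomial.map (Int.castRingHom F) f = Polynomial.aeval Q h) :
    (d : ℤ) ∣ A ∧ (d : ℤ) ∣ B ∧
      ∃ ℓ : Polynomial (AlgebraicClosure F), ℓ.degree = 1 ∧
        h.map (algebraMap F (AlgebraicClosure F)) =
          (Polynomial.dickson 1 (1 : AlgebraicClosure F) d).comp ℓ := by

  have hdet : Matrix.det (!![X, -1; 1, 0] : Matrix (Fin 2) (Fin 2) F[X]) = 1 := by
    simp [Matrix.det_fin_two]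
  let M : SL2 F[X] := ⟨!![X, -1; 1, 0], hdet⟩
  have hM : Matrix.trace (M : Matrix (Fin 2) (Fin 2) F[X]) = X := by
    simp [M, Matrix.trace_fin_two]
  have hl : h.comp (MvPolynomial.aeval (trPoint M 1) Q) = dickson 1 (1 : F) A.natAbs := by
    rw [← dk_eval f Q h hdec, ← hf, dk_word_left, ← hA, dk_trace_zpow M hM]
  have hr : h.comp (MvPolynomial.aeval (trPoint 1 M) Q) = dickson 1 (1 : F) B.natAbs := by
    rw [← dk_eval f Q h hdec, ← hf, dk_word_right, ← hB, dk_trace_zpow M hM]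
  have hdA : (d : ℤ) ∣ A := by
    by_cases h0 : A = 0
    · simp [h0]
    · exact Int.natCast_dvd.2 (dk_final _ _ d _ hd (Int.natAbs_pos.2 h0) hl).1
  have hdB : (d : ℤ) ∣ B := by
    by_cases h0 : B = 0
    · simp [h0]
    · exact Int.natCast_dvd.2 (dk_final _ _ d _ hd (Int.natAbs_pos.2 h0) hr).1
  refine ⟨hdA, hdB, ?_⟩
  rcases hAB with h0 | h0
  · exact (dk_final _ _ d _ hd (Int.natAbs_pos.2 h0) hl).2
  · exact (dk_final _ _ d _ hd (Int.natAbs_pos.2 h0) hr).2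
end

section
/- Let w = x^{a_1}y^{b_1}···x^{a_r}y^{b_r} be a reduced word of complexity r, and let F = ℚ, or F = F_p for a prime p with p > max_i max(|a_i|, |b_i|). Suppose that over F the trace polynomial decomposes as f_w = h ∘ q, where h is a univariate polynomial over F of degree n and q ∈ F[s,u,t]; let m be the degree of q in the variable u. Then r = nm, and there exists a reduced word v of complexity m such that w is trace-similar to v^n. -/
open Matrix Polynomial

/-! ### Powers of triangular matrices -/

section TraceAux

/-- The (1,2)-entry of the `a`-th power of `[[z,1],[0,z⁻¹]]`. -/
noncomputable def sg {K : Type} [Field K] (z : K) (a : ℤ) : K :=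
  open Classical in
  if z = z⁻¹ then (a : K) * z ^ (a - 1) else (z ^ a - (z ^ a)⁻¹) / (z - z⁻¹)

lemma sg_zero {K : Type} [Field K] (z : K) : sg z 0 = 0 := by
  simp [sg]

lemma sg_succ {K : Type} [Field K] (z : K) (hz : z ≠ 0) (a : ℤ) :
    sg z (a + 1) = z ^ a + sg z a * z⁻¹ := by
  unfold sg
  split_ifs with h
  · have h2 : z ^ (a - 1) * z⁻¹ = z ^ a := by
      rw [zpow_sub_one₀ hz, mul_assoc, ← h, ← pow_two]
      have : z * z = 1 := by nth_rewrite 2 [h]; exact mul_inv_cancel₀ hz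
      rw [pow_two, this, mul_one]
    rw [mul_assoc, h2]
    push_cast
    rw [add_sub_cancel_right]; ring
  · have h' : z - z⁻¹ ≠ 0 := sub_ne_zero.mpr h
    have ha : z ^ a ≠ 0 := zpow_ne_zero _ hz
    rw [zpow_add_one₀ hz]
    rw [div_eq_iff h', add_mul, mul_assoc, mul_comm z⁻¹, ← mul_assoc, div_mul_cancel₀ _ h']
    rw [mul_inv]
    ring

lemma sg_one {K : Type} [Field K] (a : ℤ) : sg (1 : K) a = a := by
  simp [sg]

/-- upper triangular matrix -/
noncomputable def xm {K : Type} [Field K] (z : K) (hz : z ≠ 0) (α : K[X]) : SL2 K[X] :=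
  ⟨!![C z, α; 0, C z⁻¹], by rw [Matrix.det_fin_two_of, ← C_mul, mul_inv_cancel₀ hz]; simp⟩

/-- lower triangular matrix -/
noncomputable def ym {K : Type} [Field K] (z : K) (hz : z ≠ 0) (α : K[X]) : SL2 K[X] :=
  ⟨!![C z, 0; α, C z⁻¹], by rw [Matrix.det_fin_two_of, ← C_mul, mul_inv_cancel₀ hz]; simp⟩

lemma xm_coe {K : Type} [Field K] (z : K) (hz : z ≠ 0) (α : K[X]) :
    ((xm z hz α : SL2 K[X]) : Matrix (Fin 2) (Fin 2) K[X]) = !![C z, α; 0, C z⁻¹] := rfl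

lemma ym_coe {K : Type} [Field K] (z : K) (hz : z ≠ 0) (α : K[X]) :
    ((ym z hz α : SL2 K[X]) : Matrix (Fin 2) (Fin 2) K[X]) = !![C z, 0; α, C z⁻¹] := rfl

lemma mat_ext2 {R : Type*} {a b c d a' b' c' d' : R} (h1 : a = a') (h2 : b = b') (h3 : c = c')
    (h4 : d = d') : !![a, b; c, d] = !![a', b'; c', d'] := by
  rw [h1, h2, h3, h4]

lemma int_pow_char {G : Type*} [Group G] (g : G) (u : ℤ → G) (h0 : u 0 = 1)
    (h1 : ∀ a, u (a + 1) = g * u a) (a : ℤ) : g ^ a = u a := by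
  have key : ∀ a : ℤ, g ^ (a + 1) = g * g ^ a := fun a => by
    rw [add_comm, _root_.zpow_add, zpow_one]
  induction a using Int.induction_on with
  | zero => simp [h0]
  | succ i ih => rw [key, ih, h1]
  | pred i ih =>
    have h2 := key (-(i:ℤ) - 1)
    have h3 := h1 (-(i:ℤ) - 1)
    rw [sub_add_cancel] at h2 h3
    rw [← ih, h2] at h3
    exact mul_left_cancel h3

lemma sg_succ' {K : Type} [Field K] (z : K) (hz : z ≠ 0) (a : ℤ) :
    sg z (a + 1) = z * sg z a + (z ^ a)⁻¹ := by
  unfold sg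
  split_ifs with h
  · have h2 : ∀ a : ℤ, (z ^ a)⁻¹ = z ^ a := by
      intro a; rw [← _root_.inv_zpow, ← h]
    rw [h2, mul_left_comm, ← zpow_one_add₀ hz]
    push_cast
    rw [add_sub_cancel_right, add_sub_cancel]; ring
  · have h' : z - z⁻¹ ≠ 0 := sub_ne_zero.mpr h
    have ha : z ^ a ≠ 0 := zpow_ne_zero _ hz
    rw [zpow_add_one₀ hz]
    rw [div_eq_iff h', add_mul, mul_assoc, div_mul_cancel₀ _ h']
    rw [mul_inv]
    ring

lemma xm_zpow {K : Type} [Field K] (z : K) (hz : z ≠ 0) (α : K[X]) (a : ℤ) :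
    xm z hz α ^ a = xm (z ^ a) (zpow_ne_zero a hz) (C (sg z a) * α) := by
  refine int_pow_char _ (fun a => xm (z ^ a) (zpow_ne_zero a hz) (C (sg z a) * α)) ?_ ?_ a
  · apply Subtype.ext
    rw [xm_coe, Matrix.SpecialLinearGroup.coe_one, sg_zero]
    simp [Matrix.one_fin_two]
  · intro a
    apply Subtype.ext
    rw [Matrix.SpecialLinearGroup.coe_mul]
    simp only [xm_coe]
    rw [Matrix.mul_fin_two, sg_succ' z hz, zpow_add_one₀ hz, mul_inv]
    simp only [C_mul, C_add]
    apply mat_ext2 <;> ring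

lemma ym_zpow {K : Type} [Field K] (z : K) (hz : z ≠ 0) (α : K[X]) (a : ℤ) :
    ym z hz α ^ a = ym (z ^ a) (zpow_ne_zero a hz) (C (sg z a) * α) := by
  refine int_pow_char _ (fun a => ym (z ^ a) (zpow_ne_zero a hz) (C (sg z a) * α)) ?_ ?_ a
  · apply Subtype.ext
    rw [ym_coe, Matrix.SpecialLinearGroup.coe_one, sg_zero]
    simp [Matrix.one_fin_two]
  · intro a
    apply Subtype.ext
    rw [Matrix.SpecialLinearGroup.coe_mul]
    simp only [ym_coe]
    rw [Matrix.mul_fin_two, sg_succ z hz, zpow_add_one₀ hz, mul_inv]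
    simp only [C_mul, C_add]
    apply mat_ext2 <;> ring

lemma list_prod_deg {K : Type} [Field K] (z w κ : K) (hz : z ≠ 0) (hw : w ≠ 0)
    (l : List (ℤ × ℤ)) :
    ∃ A B D E : K[X],
      (((l.map fun p => xm z hz 1 ^ p.1 * ym w hw (X - C κ) ^ p.2).prod : SL2 K[X]) :
        Matrix (Fin 2) (Fin 2) K[X]) = !![A, B; D, E] ∧
      A.natDegree ≤ l.length ∧ A.coeff l.length = (l.map fun p => sg z p.1 * sg w p.2).prod ∧
      D.natDegree ≤ l.length ∧ B.degree < (l.length : WithBot ℕ) ∧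
      E.degree < (max l.length 1 : ℕ) := by
  induction l with
  | nil => exact ⟨1, 0, 0, 1, by simp [Matrix.one_fin_two], by simp, by simp, by simp, by simp, by simp⟩
  | cons p l ih =>
    obtain ⟨A, B, D, E, hM, hA, hAc, hD, hB, hE⟩ := ih
    simp only [List.map_cons, List.prod_cons, List.length_cons]
    rw [Matrix.SpecialLinearGroup.coe_mul, hM, xm_zpow, ym_zpow,
      Matrix.SpecialLinearGroup.coe_mul, xm_coe, ym_coe, Matrix.mul_fin_two, Matrix.mul_fin_two]
    set s := sg z p.1
    set t := sg w p.2
    have hX : (X - C κ : K[X]).natDegree ≤ 1 := (natDegree_X_sub_C κ).le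
    have h1 : (C (z ^ p.1) * C (w ^ p.2) + C s * 1 * (C t * (X - C κ))).natDegree ≤ 1 := by
      compute_degree
    have h1c : (C (z ^ p.1) * C (w ^ p.2) + C s * 1 * (C t * (X - C κ))).coeff 1 = s * t := by
      rw [← C_mul, mul_one, ← mul_assoc, ← C_mul, coeff_add, coeff_C_mul, coeff_sub]
      simp [-map_mul]
    have h2 : (C (z ^ p.1) * 0 + C s * 1 * C (w ^ p.2)⁻¹).natDegree ≤ 0 := by
      compute_degree
    have h3 : (0 * C (w ^ p.2) + C (z ^ p.1)⁻¹ * (C t * (X - C κ))).natDegree ≤ 1 := by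
      compute_degree
    have h4 : (0 * 0 + C (z ^ p.1)⁻¹ * C (w ^ p.2)⁻¹ : K[X]).natDegree ≤ 0 := by
      compute_degree
    generalize C (z ^ p.1) * C (w ^ p.2) + C s * 1 * (C t * (X - C κ)) = M1 at *
    generalize C (z ^ p.1) * 0 + C s * 1 * C (w ^ p.2)⁻¹ = M2 at *
    generalize 0 * C (w ^ p.2) + C (z ^ p.1)⁻¹ * (C t * (X - C κ)) = M3 at *
    generalize 0 * 0 + C (z ^ p.1)⁻¹ * C (w ^ p.2)⁻¹ = M4 at *
    have mulB : ∀ M : K[X], M.natDegree ≤ 1 → (M * B).degree < ((l.length + 1 : ℕ) : WithBot ℕ) := by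
      intro M hM
      rw [degree_lt_iff_coeff_zero] at hB ⊢
      intro k hk
      rw [coeff_mul]
      refine Finset.sum_eq_zero fun ij hij => ?_
      rw [Finset.HasAntidiagonal.mem_antidiagonal] at hij
      by_cases hi : ij.1 ≤ 1
      · rw [hB ij.2 (by omega), mul_zero]
      · rw [coeff_eq_zero_of_natDegree_lt (by omega), zero_mul]
    have mulE : ∀ M : K[X], M.natDegree ≤ 0 → (M * E).degree < ((l.length + 1 : ℕ) : WithBot ℕ) := by
      intro M hM
      rw [degree_lt_iff_coeff_zero] at hE ⊢
      intro k hk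
      rw [natDegree_eq_zero.mp (by omega : M.natDegree = 0) |>.choose_spec.symm, coeff_C_mul,
        hE k (by omega), mul_zero]
    refine ⟨_, _, _, _, rfl, ?_, ?_, ?_, ?_, ?_⟩
    · refine (natDegree_add_le _ _).trans (max_le ?_ ?_)
      · exact natDegree_mul_le.trans (by omega)
      · exact natDegree_mul_le.trans (by omega)
    · rw [coeff_add, add_comm l.length, coeff_mul_add_eq_of_natDegree_le h1 hA, h1c, hAc,
        coeff_eq_zero_of_natDegree_lt (p := M2 * D), add_zero]
      exact natDegree_mul_le.trans_lt (by omega)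
    · refine (natDegree_add_le _ _).trans (max_le ?_ ?_)
      · exact natDegree_mul_le.trans (by omega)
      · exact natDegree_mul_le.trans (by omega)
    · exact (degree_add_le _ _).trans_lt (max_lt (mulB _ h1) (mulE _ h2))
    · rw [max_eq_left (by omega)]
      exact (degree_add_le _ _).trans_lt (max_lt (mulB _ h3) (mulE _ h4))

lemma trace_word {K : Type} [Field K] {r : ℕ} (a b : Fin r → ℤ)
    (f : MvPolynomial (Fin 3) ℤ) (hf : IsTracePolynomial (wordOf a b) f)
    (z w : K) (hz : z ≠ 0) (hw : w ≠ 0) :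
    (MvPolynomial.eval (![C (z + z⁻¹), X, C (w + w⁻¹)] : Fin 3 → K[X])
        (MvPolynomial.map (Int.castRingHom K[X]) f)).natDegree ≤ r ∧
    (0 < r → (MvPolynomial.eval (![C (z + z⁻¹), X, C (w + w⁻¹)] : Fin 3 → K[X])
        (MvPolynomial.map (Int.castRingHom K[X]) f)).coeff r =
          (∏ i, sg z (a i)) * ∏ i, sg w (b i)) := by
  set κ := z * w + z⁻¹ * w⁻¹ with hκ
  have h1 := hf K[X] (xm z hz 1) (ym w hw (X - C κ))
  have htp : trPoint (xm z hz 1) (ym w hw (X - C κ)) =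
      (![C (z + z⁻¹), X, C (w + w⁻¹)] : Fin 3 → K[X]) := by
    unfold trPoint
    rw [Matrix.SpecialLinearGroup.coe_mul, xm_coe, ym_coe, Matrix.mul_fin_two]
    simp only [Matrix.trace_fin_two_of, hκ, C_add, C_mul]
    congr! 2
    ring_nf
  rw [htp] at h1
  rw [← h1]
  have hw' : wordEval (wordOf a b) (xm z hz 1) (ym w hw (X - C κ)) =
      ((List.ofFn fun i => (a i, b i)).map
        fun p => xm z hz 1 ^ p.1 * ym w hw (X - C κ) ^ p.2).prod := by
    unfold wordEval wordOf
    rw [map_list_prod, List.map_ofFn, List.map_ofFn]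
    congr 2
    funext i
    simp
  obtain ⟨A, B, D, E, hM, hA, hAc, hD, hB, hE⟩ :=
    list_prod_deg z w κ hz hw (List.ofFn fun i => (a i, b i))
  rw [hw', hM, Matrix.trace_fin_two_of]
  rw [List.length_ofFn] at *
  constructor
  · refine (natDegree_add_le _ _).trans (max_le hA ?_)
    rw [natDegree_le_iff_coeff_eq_zero]
    rw [degree_lt_iff_coeff_zero] at hE
    intro N hN
    exact hE N (by omega)
  · intro hr
    rw [degree_lt_iff_coeff_zero] at hE
    rw [coeff_add, hE r (by omega), hAc, List.map_ofFn, List.prod_ofFn, add_zero,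
      ← Finset.prod_mul_distrib]
    rfl

lemma dec_eval {F K : Type} [Field F] [Field K] [Algebra F K]
    (f : MvPolynomial (Fin 3) ℤ) (q : MvPolynomial (Fin 3) F) (h : Polynomial F)
    (hdec : MvPolynomial.map (Int.castRingHom F) f = Polynomial.aeval q h) (pt : Fin 3 → K[X]) :
    MvPolynomial.eval pt (MvPolynomial.map (Int.castRingHom K[X]) f) =
      (h.map (algebraMap F K)).comp (MvPolynomial.aeval pt q) := by
  have h1 : MvPolynomial.eval pt (MvPolynomial.map (Int.castRingHom K[X]) f) =
      MvPolynomial.aeval pt (MvPolynomial.map (Int.castRingHom F) f) := by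
    rw [MvPolynomial.eval_map, MvPolynomial.aeval_def, MvPolynomial.eval₂_map]
    congr 1
    exact RingHom.ext_int _ _
  rw [h1, hdec, ← Polynomial.aeval_algHom_apply, Polynomial.comp, Polynomial.eval₂_map,
    Polynomial.aeval_def]
  rfl

lemma phi_eq {F K : Type} [Field F] [Field K] [Algebra F K]
    (q : MvPolynomial (Fin 3) F) (s t : K) :
    MvPolynomial.aeval (![C s, X, C t] : Fin 3 → K[X]) q =
      (MvPolynomial.finSuccEquiv F 2 (MvPolynomial.rename (Equiv.swap (0 : Fin 3) 1) q)).map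
        (MvPolynomial.aeval (![s, t] : Fin 2 → K) : MvPolynomial (Fin 2) F →ₐ[F] K).toRingHom := by
  have h : (MvPolynomial.aeval (![C s, X, C t] : Fin 3 → K[X]) :
        MvPolynomial (Fin 3) F →ₐ[F] K[X]) =
      ((Polynomial.mapAlgHom
        (MvPolynomial.aeval (![s, t] : Fin 2 → K) : MvPolynomial (Fin 2) F →ₐ[F] K)).comp
        (MvPolynomial.finSuccEquiv F 2).toAlgHom).comp
        (MvPolynomial.rename (Equiv.swap (0 : Fin 3) 1)) := by
    have e1 : MvPolynomial.finSuccEquiv F 2 (MvPolynomial.X 1) = C (MvPolynomial.X 0) :=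
      MvPolynomial.finSuccEquiv_X_succ (j := 0)
    have e2 : MvPolynomial.finSuccEquiv F 2 (MvPolynomial.X 2) = C (MvPolynomial.X 1) :=
      MvPolynomial.finSuccEquiv_X_succ (j := 1)
    have e3 : (Equiv.swap (0 : Fin 3) 1) 2 = 2 := by decide
    apply MvPolynomial.algHom_ext
    intro i
    fin_cases i
    · simp [e1]
    · simp [MvPolynomial.finSuccEquiv_X_zero]
    · simp [e2, e3]
  rw [h]
  rfl

lemma natDegree_Phi {F : Type} [Field F] (q : MvPolynomial (Fin 3) F) :
    (MvPolynomial.finSuccEquiv F 2 (MvPolynomial.rename (Equiv.swap (0 : Fin 3) 1) q)).natDegree =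
      MvPolynomial.degreeOf 1 q := by
  rw [MvPolynomial.natDegree_finSuccEquiv]
  have := MvPolynomial.degreeOf_rename_of_injective (p := q) (Equiv.swap (0 : Fin 3) 1).injective 1
  rwa [Equiv.swap_apply_right] at this

lemma phi_natDegree_le {F K : Type} [Field F] [Field K] [Algebra F K]
    (q : MvPolynomial (Fin 3) F) (s t : K) :
    (MvPolynomial.aeval (![C s, X, C t] : Fin 3 → K[X]) q).natDegree ≤
      MvPolynomial.degreeOf 1 q := by
  rw [phi_eq, ← natDegree_Phi]
  exact natDegree_map_le

lemma exists_add_inv {L : Type} [Field L] [IsAlgClosed L] (s : L) :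
    ∃ z : L, z ≠ 0 ∧ z + z⁻¹ = s := by
  have hd : (X ^ 2 - C s * X + 1 : L[X]).degree = 2 := by compute_degree!
  obtain ⟨z, hz⟩ := IsAlgClosed.exists_root (X ^ 2 - C s * X + 1 : L[X]) (by rw [hd]; decide)
  have hz' : z ^ 2 - s * z + 1 = 0 := by simpa using hz
  have hz0 : z ≠ 0 := by
    rintro rfl
    simp at hz'
  refine ⟨z, hz0, ?_⟩
  field_simp
  linear_combination hz'

lemma exists_phi {F L : Type} [Field F] [Field L] [Algebra F L] [IsAlgClosed L]
    (q : MvPolynomial (Fin 3) F) :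
    ∃ z w : L, z ≠ 0 ∧ w ≠ 0 ∧
    (MvPolynomial.aeval (![C (z + z⁻¹), X, C (w + w⁻¹)] : Fin 3 → L[X]) q).natDegree =
      MvPolynomial.degreeOf 1 q := by
  by_cases hq : q = 0
  · exact ⟨1, 1, one_ne_zero, one_ne_zero, by simp [hq]⟩
  set P := MvPolynomial.finSuccEquiv F 2 (MvPolynomial.rename (Equiv.swap (0 : Fin 3) 1) q) with hP
  have hP0 : P ≠ 0 := by
    rw [hP]
    simpa [MvPolynomial.rename_eq_zero_iff_of_injective] using
      fun h => hq (MvPolynomial.rename_injective _ (Equiv.swap (0 : Fin 3) 1).injective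
        (by rw [h, map_zero]))
  have hL : P.leadingCoeff ≠ 0 := leadingCoeff_ne_zero.mpr hP0
  have hmap : MvPolynomial.map (algebraMap F L) P.leadingCoeff ≠ 0 := by
    intro h0
    exact hL (MvPolynomial.map_injective _ (algebraMap F L).injective (by rw [h0, map_zero]))
  have : Infinite L := IsAlgClosed.instInfinite
  have : ∃ v : Fin 2 → L, MvPolynomial.eval v (MvPolynomial.map (algebraMap F L) P.leadingCoeff) ≠ 0 := by
    by_contra! hcon
    exact hmap (MvPolynomial.funext fun x => by rw [hcon x, map_zero])
  obtain ⟨v, hv⟩ := this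
  obtain ⟨z, hz, hzs⟩ := exists_add_inv (v 0)
  obtain ⟨w, hw, hws⟩ := exists_add_inv (v 1)
  refine ⟨z, w, hz, hw, ?_⟩
  rw [phi_eq, ← hP, ← natDegree_Phi, ← hP, hzs, hws]
  apply natDegree_map_of_leadingCoeff_ne_zero
  have hvv : (![v 0, v 1] : Fin 2 → L) = v := by
    ext i; fin_cases i <;> rfl
  rw [hvv]
  rw [MvPolynomial.eval_map] at hv
  exact hv

lemma upper {F : Type} [Field F] {r : ℕ} (a b : Fin r → ℤ)
    (f : MvPolynomial (Fin 3) ℤ) (hf : IsTracePolynomial (wordOf a b) f)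
    (q : MvPolynomial (Fin 3) F) (h : Polynomial F)
    (hdec : MvPolynomial.map (Int.castRingHom F) f = Polynomial.aeval q h) :
    h.natDegree * MvPolynomial.degreeOf 1 q ≤ r := by
  obtain ⟨z, w, hz, hw, hd⟩ := exists_phi (L := AlgebraicClosure F) q
  have h1 := (trace_word a b f hf z w hz hw).1
  rwa [dec_eval f q h hdec, natDegree_comp, natDegree_map, hd] at h1

lemma point {F K : Type} [Field F] [Field K] [Algebra F K] {r : ℕ} (hr : 0 < r) (a b : Fin r → ℤ)
    (f : MvPolynomial (Fin 3) ℤ) (hf : IsTracePolynomial (wordOf a b) f)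
    (q : MvPolynomial (Fin 3) F) (h : Polynomial F)
    (hdec : MvPolynomial.map (Int.castRingHom F) f = Polynomial.aeval q h)
    (z w : K) (hz : z ≠ 0) (hw : w ≠ 0)
    (hne : (∏ i, sg z (a i)) * ∏ i, sg w (b i) ≠ 0) :
    r ≤ h.natDegree * MvPolynomial.degreeOf 1 q ∧
    ∃ G : K, (∏ i, sg z (a i)) * ∏ i, sg w (b i) =
      algebraMap F K h.leadingCoeff * G ^ h.natDegree := by
  obtain ⟨h1, h2⟩ := trace_word a b f hf z w hz hw
  replace h2 := h2 hr
  rw [← h2] at hne ⊢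
  have h3 := le_antisymm h1 (le_natDegree_of_ne_zero hne)
  have h4 := phi_natDegree_le q (z + z⁻¹) (w + w⁻¹)
  have h6 := congrArg leadingCoeff (dec_eval f q h hdec ![C (z + z⁻¹), X, C (w + w⁻¹)])
  have h5 := h3
  rw [leadingCoeff, h3] at h6
  rw [dec_eval f q h hdec, natDegree_comp, natDegree_map] at h5
  refine ⟨?_, (MvPolynomial.aeval (![C (z + z⁻¹), X, C (w + w⁻¹)] : Fin 3 → K[X]) q).leadingCoeff, ?_⟩
  · rw [← h5]; exact Nat.mul_le_mul_left _ h4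
  · rw [h6, leadingCoeff_comp, natDegree_map, leadingCoeff_map]
    intro h0
    rw [h0] at h5
    omega

lemma comb_dvd {r n : ℕ} (α : Fin r → ℕ) (hα : ∀ i, 0 < α i)
    (H : ∀ k, 0 < k → n ∣ (Finset.univ.filter fun i => k ∣ α i).card) (k : ℕ) (hk : 0 < k) :
    n ∣ (Finset.univ.filter fun i => α i = k).card := by
  obtain ⟨B, hB⟩ : ∃ B, ∀ i, α i ≤ B :=
    ⟨∑ i, α i, fun i => Finset.single_le_sum (f := α) (fun _ _ => Nat.zero_le _) (Finset.mem_univ i)⟩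
  have key : ∀ N k, 0 < k → B < k + N → n ∣ (Finset.univ.filter fun i => α i = k).card := by
    intro N
    induction N with
    | zero =>
      intro k hk hBk
      rw [Finset.filter_eq_empty_iff.mpr]
      · simp
      · intro i _ h
        have := hB i
        omega
    | succ N ih =>
      intro k hk hBk
      have h1 : (Finset.univ.filter fun i => k ∣ α i).card =
          (Finset.univ.filter fun i => α i = k).card +
          (Finset.univ.filter fun i => k ∣ α i ∧ α i ≠ k).card := by
        rw [← Finset.card_union_of_disjoint]
        · congr 1
          ext i
          simp only [Finset.mem_filter, Finset.mem_univ, true_and, Finset.mem_union]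
          constructor
          · intro h; by_cases h' : α i = k
            · exact Or.inl h'
            · exact Or.inr ⟨h, h'⟩
          · rintro (h | h)
            · rw [h]
            · exact h.1
        · rw [Finset.disjoint_filter]
          intro i _ h h'
          exact h'.2 h
      have h2 : n ∣ (Finset.univ.filter fun i => k ∣ α i ∧ α i ≠ k).card := by
        rw [Finset.card_eq_sum_card_image α]
        refine Finset.dvd_sum fun v hv => ?_
        simp only [Finset.mem_image, Finset.mem_filter, Finset.mem_univ, true_and] at hv
        obtain ⟨i, ⟨hi1, hi2⟩, rfl⟩ := hv
        have hle := Nat.le_of_dvd (hα i) hi1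
        have := ih (α i) (hα i) (by omega)
        refine (congrArg (n ∣ ·) (congrArg Finset.card ?_)).mpr this
        ext j
        simp only [Finset.mem_filter, Finset.mem_univ, true_and]
        constructor
        · exact fun h => h.2
        · intro h; exact ⟨by rw [h]; exact ⟨hi1, hi2⟩, h⟩
      have h3 := H k hk
      rw [h1] at h3
      exact (Nat.dvd_add_left h2).mp h3
  exact key (B + 1) k hk (by omega)

lemma comb {r n m : ℕ} (hr : r = n * m) (a : Fin r → ℤ) (ha : ∀ i, a i ≠ 0)
    (H : ∀ k, 0 < k → n ∣ (Finset.univ.filter fun i => k ∣ (a i).natAbs).card) :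
    ∃ c : Fin m → ℤ, (∀ j, c j ≠ 0) ∧
      (↑(List.ofFn fun i => |a i|) : Multiset ℤ) = n • ↑(List.ofFn fun j => |c j|) := by
  rcases Nat.eq_zero_or_pos n with rfl | hn
  · rw [zero_mul] at hr
    subst hr
    exact ⟨fun _ => 1, by simp, by simp⟩
  set s : Multiset ℤ := ↑(List.ofFn fun i => |a i|) with hs
  have hs' : s = (Finset.univ : Finset (Fin r)).val.map fun i => |a i| := by
    rw [hs, Fin.univ_val_map]
  have hmem : ∀ v ∈ s, 0 < v := by
    intro v hv
    rw [hs', Multiset.mem_map] at hv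
    obtain ⟨i, -, rfl⟩ := hv
    exact abs_pos.mpr (ha i)
  obtain ⟨u, hu⟩ := Multiset.exists_smul_of_dvd_count s (k := n) (by
    intro v hv
    have hv0 := hmem v hv
    have := comb_dvd (fun i => (a i).natAbs) (fun i => Int.natAbs_pos.mpr (ha i)) H v.natAbs
      (by omega)
    rw [hs', Multiset.count_map]
    convert this using 1
    rw [← Finset.filter_val, Finset.card_val]
    congr 1
    ext i
    simp only [Finset.mem_filter, Finset.mem_univ, true_and]
    rw [Int.abs_eq_natAbs]
    omega)
  have hcard : Multiset.card u = m := by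
    have := congrArg Multiset.card hu
    rw [Multiset.card_nsmul, hs, Multiset.coe_card, List.length_ofFn, hr] at this
    exact (Nat.eq_of_mul_eq_mul_left hn this).symm
  have humem : ∀ v ∈ u, 0 < v := by
    intro v hv
    apply hmem
    rw [hu, Multiset.mem_nsmul]
    exact ⟨by omega, hv⟩
  obtain ⟨l, rfl⟩ := Quot.exists_rep u
  change Multiset.card (l : Multiset ℤ) = m at hcard
  rw [Multiset.coe_card] at hcard
  subst hcard
  have hl : ∀ v ∈ l, 0 < v := fun v hv => humem v hv
  refine ⟨l.get, fun j => (hl _ (List.get_mem l j)).ne', ?_⟩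
  rw [hu]
  have : (List.ofFn fun j => |l.get j|) = l := by
    conv_rhs => rw [← List.ofFn_get l]
    congr 1
    funext j
    exact abs_of_pos (hl _ (List.get_mem l j))
  rw [this]
  rfl

lemma sg_T {K : Type} [Field K] (T : K) (hT : T ≠ 0) (hT2 : T ≠ T⁻¹) (a : ℤ) :
    sg T a = (((a.sign : ℤ)) : K) * (T ^ (2 * a.natAbs) - 1) / (T ^ a.natAbs * (T - T⁻¹)) := by
  have h' : T - T⁻¹ ≠ 0 := sub_ne_zero.mpr hT2
  have hp : ∀ k : ℕ, T ^ k ≠ 0 := fun k => pow_ne_zero k hT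
  rw [sg, if_neg hT2]
  rw [div_eq_div_iff h' (mul_ne_zero (hp _) h')]
  rcases lt_trichotomy a 0 with h | h | h
  · obtain ⟨k, hk⟩ : ∃ k : ℕ, a = -(k : ℤ) := ⟨a.natAbs, by omega⟩
    have hk2 : a.natAbs = k := by omega
    rw [Int.sign_eq_neg_one_of_neg h, hk2, hk, _root_.zpow_neg, zpow_natCast, inv_inv]
    push_cast
    rw [← mul_assoc]
    congr 1
    rw [pow_mul']
    field_simp [hp k]
    ring
  · subst h; simp
  · obtain ⟨k, hk⟩ : ∃ k : ℕ, a = (k : ℤ) := ⟨a.natAbs, by omega⟩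
    have hk2 : a.natAbs = k := by omega
    rw [Int.sign_eq_one_of_pos h, hk2, hk, zpow_natCast]
    push_cast
    rw [← mul_assoc]
    congr 1
    rw [pow_mul']
    field_simp [hp k]

lemma frac_T {L : Type} [Field L] :
    (algebraMap L[X] (FractionRing L[X]) X) ≠ 0 ∧
    (algebraMap L[X] (FractionRing L[X]) X) ≠ (algebraMap L[X] (FractionRing L[X]) X)⁻¹ := by
  have hinj := IsFractionRing.injective L[X] (FractionRing L[X])
  have h0 : (algebraMap L[X] (FractionRing L[X]) X) ≠ 0 := by
    rw [Ne, map_eq_zero_iff _ hinj]; exact X_ne_zero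
  refine ⟨h0, fun h => ?_⟩
  have h1 : (algebraMap L[X] (FractionRing L[X]) X) * (algebraMap L[X] (FractionRing L[X]) X) = 1 := by
    nth_rewrite 2 [h]; exact mul_inv_cancel₀ h0
  rw [← map_mul, ← map_one (algebraMap L[X] (FractionRing L[X]))] at h1
  have h2 := congrArg natDegree (hinj h1)
  rw [natDegree_mul X_ne_zero X_ne_zero] at h2
  simp at h2

lemma frac_sg_ne {L : Type} [Field L] (a : ℤ) (ha : a ≠ 0) :
    sg (algebraMap L[X] (FractionRing L[X]) X) a ≠ 0 := by
  obtain ⟨h0, h1⟩ := frac_T (L := L)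
  have hinj := IsFractionRing.injective L[X] (FractionRing L[X])
  rw [sg_T _ h0 h1]
  refine div_ne_zero (mul_ne_zero ?_ ?_) (mul_ne_zero (pow_ne_zero _ h0) (sub_ne_zero.mpr h1))
  · rcases lt_or_gt_of_ne ha with h | h
    · simp [Int.sign_eq_neg_one_of_neg h]
    · simp [Int.sign_eq_one_of_pos h]
  · rw [← map_pow, ← map_one (algebraMap L[X] (FractionRing L[X])), ← map_sub, Ne,
      map_eq_zero_iff _ hinj]
    exact X_pow_sub_C_ne_zero (by omega) 1

lemma mult {L : Type} [Field L] [IsAlgClosed L] {r n m : ℕ} (hr : r = n * m)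
    (a : Fin r → ℤ) (ha : ∀ i, (a i : L) ≠ 0) (h2 : (2 : L) ≠ 0)
    (c : L) (G : FractionRing L[X])
    (hG : ∏ i, sg (algebraMap L[X] (FractionRing L[X]) X) (a i) =
      algebraMap L[X] (FractionRing L[X]) (C c) * G ^ n) (k : ℕ) (hk : 0 < k) :
    n ∣ (Finset.univ.filter fun i => k ∣ (a i).natAbs).card := by
  by_cases hex : ∀ i, ¬ k ∣ (a i).natAbs
  · rw [Finset.filter_eq_empty_iff.mpr fun i _ => hex i]
    simp
  push Not at hex
  obtain ⟨i0, hi0⟩ := hex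
  have ha0 : ∀ i, a i ≠ 0 := fun i h => ha i (by rw [h]; simp)
  have hnat : ∀ i, ((a i).natAbs : L) ≠ 0 := by
    intro i h
    apply ha i
    rcases Int.natAbs_eq (a i) with h' | h'
    · rw [h', Int.cast_natCast, h]
    · rw [h', Int.cast_neg, Int.cast_natCast, h, neg_zero]
  have hkL : (k : L) ≠ 0 := by
    intro h
    obtain ⟨d, hd⟩ := hi0
    apply hnat i0
    rw [hd]; push_cast; rw [h, zero_mul]
  obtain ⟨h0, h1⟩ := frac_T (L := L)
  have hinj := IsFractionRing.injective L[X] (FractionRing L[X])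
  set ι := algebraMap L[X] (FractionRing L[X]) with hι
  set T := ι X with hT
  have hd0 : T - T⁻¹ ≠ 0 := sub_ne_zero.mpr h1
  -- polynomial identity
  set e := ∑ i, (a i).natAbs
  set ε : L := ∏ i, (((a i).sign : ℤ) : L)
  set Q : L[X] := ∏ i, (X ^ (2 * (a i).natAbs) - 1) with hQ
  have hQi : ∀ i, (X ^ (2 * (a i).natAbs) - 1 : L[X]) ≠ 0 := fun i =>
    X_pow_sub_C_ne_zero (by have := ha0 i; omega) 1
  have hQ0 : Q ≠ 0 := Finset.prod_ne_zero_iff.mpr fun i _ => hQi i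
  have hε : ε ≠ 0 := by
    refine Finset.prod_ne_zero_iff.mpr fun i _ => ?_
    rcases lt_or_gt_of_ne (ha0 i) with h | h
    · simp [Int.sign_eq_neg_one_of_neg h]
    · simp [Int.sign_eq_one_of_pos h]
  have hid : ι (C ε * Q) = ι (C c * X ^ e) * (G * (T - T⁻¹) ^ m) ^ n := by
    have hL : ∏ i, sg T (a i) = ι (C ε * Q) / (T ^ e * (T - T⁻¹) ^ r) := by
      have : ∀ i, sg T (a i) = ι (C (((a i).sign : ℤ) : L) * (X ^ (2 * (a i).natAbs) - 1)) /
          (T ^ (a i).natAbs * (T - T⁻¹)) := by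
        intro i
        rw [sg_T T h0 h1, map_mul, map_sub, map_pow, map_one, ← hT]
        simp
      simp_rw [this]
      rw [Finset.prod_div_distrib, ← map_prod, Finset.prod_mul_distrib, Finset.prod_mul_distrib,
        Finset.prod_pow_eq_pow_sum, Finset.prod_const, ← map_prod]
      simp [e, ε, hQ]
    rw [hL, div_eq_iff (mul_ne_zero (pow_ne_zero _ h0) (pow_ne_zero _ hd0))] at hG
    rw [hG, map_mul, map_pow, ← hT, mul_pow, ← pow_mul, hr, mul_comm m n]
    ring
  obtain ⟨A, B, hB, hAB⟩ := IsFractionRing.div_surjective L[X] (G * (T - T⁻¹) ^ m)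
  have hB0 : B ≠ 0 := nonZeroDivisors.ne_zero hB
  have hιB : ι B ≠ 0 := by rwa [Ne, map_eq_zero_iff _ hinj]
  have hpoly : C ε * (Q * B ^ n) = C c * (X ^ e * A ^ n) := by
    apply hinj
    rw [← hAB, div_pow, mul_div_assoc', eq_div_iff (pow_ne_zero _ hιB)] at hid
    rw [← mul_assoc, ← mul_assoc, map_mul, map_pow, hid, map_mul ι _ (A ^ n), map_pow ι A]
  have hlhs : C ε * (Q * B ^ n) ≠ 0 :=
    mul_ne_zero (C_ne_zero.mpr hε) (mul_ne_zero hQ0 (pow_ne_zero _ hB0))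
  have hrhs := hlhs
  rw [hpoly] at hrhs
  have h2k : ((2 * k : ℕ) : L) ≠ 0 := by push_cast; exact mul_ne_zero h2 hkL
  have : NeZero ((2 * k : ℕ) : L) := ⟨h2k⟩
  obtain ⟨ζ, hζ⟩ := HasEnoughRootsOfUnity.exists_primitiveRoot L (2 * k)
  have hζ0 : ζ ≠ 0 := hζ.ne_zero (by omega)
  have hroots := congrArg (rootMultiplicity ζ) hpoly
  classical
  rw [rootMultiplicity_mul hlhs, rootMultiplicity_mul hrhs,
    rootMultiplicity_mul (right_ne_zero_of_mul hlhs),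
    rootMultiplicity_mul (right_ne_zero_of_mul hrhs), rootMultiplicity_C, rootMultiplicity_C,
    ← count_roots (B ^ n), ← count_roots (A ^ n), ← count_roots (X ^ e), roots_pow, roots_pow, roots_pow, roots_X,
    Multiset.count_nsmul, Multiset.count_nsmul, Multiset.count_nsmul,
    Multiset.count_singleton, if_neg hζ0] at hroots
  have hQm : rootMultiplicity ζ Q = (Finset.univ.filter fun i => k ∣ (a i).natAbs).card := by
    rw [← count_roots, hQ, roots_prod _ _ hQ0, Multiset.count_bind, Finset.card_filter]
    change (∑ i, Multiset.count ζ (X ^ (2 * (a i).natAbs) - 1 : L[X]).roots) = _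
    refine Finset.sum_congr rfl fun i _ => ?_
    rw [count_roots]
    have hle : rootMultiplicity ζ (X ^ (2 * (a i).natAbs) - 1 : L[X]) ≤ 1 := by
      apply rootMultiplicity_le_one_of_separable
      rw [X_pow_sub_one_separable_iff]
      push_cast
      exact mul_ne_zero h2 (hnat i)
    have hiff : 0 < rootMultiplicity ζ (X ^ (2 * (a i).natAbs) - 1 : L[X]) ↔ k ∣ (a i).natAbs := by
      rw [rootMultiplicity_pos (hQi i)]
      rw [← Nat.mul_dvd_mul_iff_left (a := 2) (by norm_num), ← hζ.pow_eq_one_iff_dvd]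
      simp [IsRoot, sub_eq_zero]
    split_ifs with hd
    · have := hiff.mpr hd; omega
    · have := mt hiff.mp hd; omega
  rw [hQm] at hroots
  simp only [zero_add, mul_zero] at hroots
  exact (Nat.dvd_add_left (Dvd.intro _ rfl)).mp (hroots ▸ Dvd.intro _ rfl)

lemma card_triv {r n m : ℕ} (hr : r = n * m) (a : Fin r → ℤ) (ha : ∀ i, (a i).natAbs = 1) (k : ℕ) :
    n ∣ (Finset.univ.filter fun i => k ∣ (a i).natAbs).card := by
  simp_rw [ha]
  by_cases hk : k ∣ 1
  · simp [hk, hr]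
  · simp [hk]

lemma field_facts {r : ℕ} (a b : Fin r → ℤ) (hab : ∀ i, a i ≠ 0 ∧ b i ≠ 0) (F : Type) [Field F]
    (hF : Nonempty (F ≃+* ℚ) ∨ ∃ p : ℕ, p.Prime ∧ Nonempty (F ≃+* ZMod p) ∧
      ∀ i, (a i).natAbs < p ∧ (b i).natAbs < p) :
    (∀ i, (a i : F) ≠ 0 ∧ (b i : F) ≠ 0) ∧
      ((2 : F) ≠ 0 ∨ ∀ i, (a i).natAbs = 1 ∧ (b i).natAbs = 1) := by
  rcases hF with ⟨⟨φ⟩⟩ | ⟨p, hp, ⟨φ⟩, hlt⟩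
  · have : CharZero F := charZero_of_injective_ringHom (f := φ.symm.toRingHom) φ.symm.injective
    exact ⟨fun i => ⟨Int.cast_ne_zero.mpr (hab i).1, Int.cast_ne_zero.mpr (hab i).2⟩,
      Or.inl two_ne_zero⟩
  · have key : ∀ x : ℤ, (x : F) = 0 → x.natAbs < p → x = 0 := by
      intro x hx hxp
      have h1 : (x : ZMod p) = 0 := by rw [← map_intCast φ, hx, map_zero]
      rw [ZMod.intCast_zmod_eq_zero_iff_dvd] at h1
      exact Int.eq_zero_of_dvd_of_natAbs_lt_natAbs h1 (by simpa using hxp)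
    refine ⟨fun i => ⟨fun h => (hab i).1 (key _ h (hlt i).1),
      fun h => (hab i).2 (key _ h (hlt i).2)⟩, ?_⟩
    by_cases h2 : (2 : F) = 0
    · right
      have hp2 : p ≤ 2 := by
        by_contra! hcon
        have := key 2 (by exact_mod_cast h2) (by simpa using hcon)
        omega
      intro i
      have := hlt i
      have := hab i
      omega
    · exact Or.inl h2

end TraceAux

theorem trace_similar_power_of_composite_trace_polynomial {r : ℕ}
    (a b : Fin r → ℤ) (hab : ∀ i, a i ≠ 0 ∧ b i ≠ 0)
    (f : MvPolynomial (Fin 3) ℤ) (hf : IsTracePolynomial (wordOf a b) f)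
    (F : Type) [Field F]
    (hF : Nonempty (F ≃+* ℚ) ∨ ∃ p : ℕ, p.Prime ∧ Nonempty (F ≃+* ZMod p) ∧
      ∀ i, (a i).natAbs < p ∧ (b i).natAbs < p)
    (q : MvPolynomial (Fin 3) F) (h : Polynomial F) (n m : ℕ)
    (hn : h.natDegree = n) (hm : MvPolynomial.degreeOf 1 q = m)
    (hdec : MvPolynomial.map (Int.castRingHom F) f = Polynomial.aeval q h) :
    r = n * m ∧
      ∃ c d : Fin m → ℤ, (∀ j, c j ≠ 0 ∧ d j ≠ 0) ∧
        (↑(List.ofFn fun i => |a i|) : Multiset ℤ) = n • ↑(List.ofFn fun j => |c j|) ∧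
        (↑(List.ofFn fun i => |b i|) : Multiset ℤ) = n • ↑(List.ofFn fun j => |d j|) := by
  subst hn hm
  obtain ⟨hcast, h2⟩ := field_facts a b hab F hF
  have hup := upper a b f hf q h hdec
  rcases Nat.eq_zero_or_pos r with hr0 | hr
  · have hr : r = h.natDegree * MvPolynomial.degreeOf 1 q := by omega
    refine ⟨hr, ?_⟩
    have : IsEmpty (Fin r) := by rw [hr0]; infer_instance
    obtain ⟨c, hc, hc'⟩ := comb hr a (fun i => (hab i).1) (fun k _ => by simp)
    obtain ⟨d, hd, hd'⟩ := comb hr b (fun i => (hab i).2) (fun k _ => by simp)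
    exact ⟨c, d, fun j => ⟨hc j, hd j⟩, hc', hd'⟩
  · have hlow := (point (K := F) hr a b f hf q h hdec 1 1 one_ne_zero one_ne_zero (by
      simp only [sg_one]
      exact mul_ne_zero (Finset.prod_ne_zero_iff.mpr fun i _ => (hcast i).1)
        (Finset.prod_ne_zero_iff.mpr fun i _ => (hcast i).2))).1
    have hr' : r = h.natDegree * MvPolynomial.degreeOf 1 q := le_antisymm hlow hup
    refine ⟨hr', ?_⟩
    have H : (∀ k, 0 < k → h.natDegree ∣ (Finset.univ.filter fun i => k ∣ (a i).natAbs).card) ∧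
        (∀ k, 0 < k → h.natDegree ∣ (Finset.univ.filter fun i => k ∣ (b i).natAbs).card) := by
      rcases h2 with h2 | h1
      · let L := AlgebraicClosure F
        have h2L : (2 : L) ≠ 0 := by
          intro h0
          apply h2
          apply (algebraMap F L).injective
          rw [map_ofNat, map_zero, h0]
        have castL : ∀ x : ℤ, (x : F) ≠ 0 → (x : L) ≠ 0 := by
          intro x hx h0
          apply hx
          apply (algebraMap F L).injective
          rw [map_intCast, map_zero, h0]
        obtain ⟨hT0, hT1⟩ := frac_T (L := L)
        have hinj := IsFractionRing.injective L[X] (FractionRing L[X])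
        have hprod : ∀ x : Fin r → ℤ, (∀ i, (x i : F) ≠ 0) →
            (∏ i, sg (1 : FractionRing L[X]) (x i)) =
              algebraMap L[X] (FractionRing L[X]) (C (∏ i, (x i : L))) := by
          intro x _
          rw [map_prod, map_prod]
          refine Finset.prod_congr rfl fun i _ => ?_
          rw [sg_one, map_intCast, map_intCast]
        have hprod0 : ∀ x : Fin r → ℤ, (∀ i, (x i : F) ≠ 0) → (∏ i, (x i : L)) ≠ 0 :=
          fun x hx => Finset.prod_ne_zero_iff.mpr fun i _ => castL _ (hx i)
        have hprodne : ∀ x : Fin r → ℤ, (∀ i, (x i : F) ≠ 0) →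
            (∏ i, sg (1 : FractionRing L[X]) (x i)) ≠ 0 := by
          intro x hx
          rw [hprod x hx, Ne, map_eq_zero_iff _ hinj, C_eq_zero]
          exact hprod0 x hx
        have hsgne : ∀ x : Fin r → ℤ, (∀ i, x i ≠ 0) →
            (∏ i, sg (algebraMap L[X] (FractionRing L[X]) X) (x i)) ≠ 0 :=
          fun x hx => Finset.prod_ne_zero_iff.mpr fun i _ => frac_sg_ne _ (hx i)
        have halg : ∀ x : F, algebraMap F (FractionRing L[X]) x =
            algebraMap L[X] (FractionRing L[X]) (C (algebraMap F L x)) := by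
          intro x
          rw [IsScalarTower.algebraMap_apply F L[X] (FractionRing L[X])]
          rfl
        have hfin : ∀ (P : FractionRing L[X]) (x : Fin r → ℤ), (∀ i, (x i : F) ≠ 0) →
            ∀ G : FractionRing L[X],
            P * (∏ i, sg (1 : FractionRing L[X]) (x i)) =
              algebraMap F (FractionRing L[X]) h.leadingCoeff * G ^ h.natDegree →
            P = algebraMap L[X] (FractionRing L[X])
              (C (algebraMap F L h.leadingCoeff * (∏ i, (x i : L))⁻¹)) * G ^ h.natDegree := by
          intro P x hx G hPG
          apply mul_right_cancel₀ (hprodne x hx)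
          rw [hPG, hprod x hx, halg, mul_right_comm, ← map_mul, ← C_mul, mul_assoc,
            inv_mul_cancel₀ (hprod0 x hx), mul_one]
        constructor
        · obtain ⟨-, G, hG⟩ := point (K := FractionRing L[X]) hr a b f hf q h hdec
            (algebraMap L[X] (FractionRing L[X]) X) 1 hT0 one_ne_zero
            (mul_ne_zero (hsgne a fun i => (hab i).1) (hprodne b fun i => (hcast i).2))
          exact mult hr' a (fun i => castL _ (hcast i).1) h2L _ G
            (hfin _ b (fun i => (hcast i).2) G hG)
        · obtain ⟨-, G, hG⟩ := point (K := FractionRing L[X]) hr a b f hf q h hdec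
            1 (algebraMap L[X] (FractionRing L[X]) X) one_ne_zero hT0
            (mul_ne_zero (hprodne a fun i => (hcast i).1) (hsgne b fun i => (hab i).2))
          rw [mul_comm] at hG
          exact mult hr' b (fun i => castL _ (hcast i).2) h2L _ G
            (hfin _ a (fun i => (hcast i).1) G hG)
      · exact ⟨fun k _ => card_triv hr' a (fun i => (h1 i).1) k,
          fun k _ => card_triv hr' b (fun i => (h1 i).2) k⟩
    obtain ⟨c, hc, hc'⟩ := comb hr' a (fun i => (hab i).1) H.1
    obtain ⟨d, hd, hd'⟩ := comb hr' b (fun i => (hab i).2) H.2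
    exact ⟨c, d, fun j => ⟨hc j, hd j⟩, hc', hd'⟩
end

section
/- Let w = x^{a_1}y^{b_1}···x^{a_r}y^{b_r} be a reduced word of complexity r ≥ 2 with A ≠ 0 or B ≠ 0, and let p be a prime with p > r. Suppose that over F_p the trace polynomial satisfies f_w(s,u,t) = D_r(q(s,u,t)) for some q ∈ F_p[s,u,t]. Then r divides both A and B, and w = (x^{A/r} y^{B/r})^r; that is, a_i = A/r and b_i = B/r for all i. -/
open Matrix Polynomial

section helpers
set_option linter.unusedSimpArgs false

lemma dk_coeff (R : Type) [CommRing R] (n : ℕ) :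
    (∀ m, n < m → (dickson 1 (1 : R) n).coeff m = 0) ∧
    (1 ≤ n → (dickson 1 (1 : R) n).coeff n = 1) := by
  induction n using Nat.strong_induction_on with
  | _ n ih =>
    match n, ih with
    | 0, _ =>
      refine ⟨fun m hm => ?_, fun h => absurd h (by norm_num)⟩
      have : dickson 1 (1 : R) 0 = C 2 := by
        rw [dickson_zero]; norm_num; rfl
      rw [this, coeff_C, if_neg (by omega)]
    | 1, _ =>
      refine ⟨fun m hm => ?_, fun h => ?_⟩
      · rw [dickson_one, coeff_X, if_neg (by omega)]
      · rw [dickson_one, coeff_X_one]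
    | n+2, ih =>
      obtain ⟨h1, h1'⟩ := ih (n+1) (by omega)
      obtain ⟨h0, _⟩ := ih n (by omega)
      refine ⟨fun m hm => ?_, fun _ => ?_⟩
      · obtain ⟨m, rfl⟩ : ∃ k, m = k + 1 := ⟨m - 1, by omega⟩
        rw [dickson_add_two, coeff_sub, coeff_X_mul, coeff_C_mul, h1 _ (by omega), h0 _ (by omega)]
        simp
      · rw [dickson_add_two, coeff_sub, coeff_X_mul, coeff_C_mul, h1' (by omega), h0 _ (by omega)]
        simp

lemma dk_natDegree (R : Type) [CommRing R] [Nontrivial R] (n : ℕ) (hn : 1 ≤ n) :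
    (dickson 1 (1 : R) n).natDegree = n := by
  obtain ⟨h1, h2⟩ := dk_coeff R n
  apply le_antisymm
  · exact natDegree_le_iff_coeff_eq_zero.2 h1
  · exact le_natDegree_of_ne_zero (by rw [h2 hn]; exact one_ne_zero)

lemma dk_leading (R : Type) [CommRing R] [Nontrivial R] (n : ℕ) (hn : 1 ≤ n) :
    (dickson 1 (1 : R) n).leadingCoeff = 1 := by
  rw [leadingCoeff, dk_natDegree R n hn, (dk_coeff R n).2 hn]

lemma sl_mul {R : Type} [CommRing R] (M N : SL2 R) (i j : Fin 2) :
    (M * N) i j = M i 0 * N 0 j + M i 1 * N 1 j := by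
  rw [Matrix.SpecialLinearGroup.coe_mul, Matrix.mul_apply, Fin.sum_univ_two]

def uu (R : Type) [CommRing R] (l : Rˣ) : SL2 R :=
  ⟨!![(l : R), l - (l⁻¹ : Rˣ); 0, (l⁻¹ : Rˣ)], by simp [Matrix.det_fin_two]⟩

lemma uu00 {R : Type} [CommRing R] (l : Rˣ) : uu R l 0 0 = l := rfl
lemma uu01 {R : Type} [CommRing R] (l : Rˣ) : uu R l 0 1 = l - (l⁻¹ : Rˣ) := rfl
lemma uu10 {R : Type} [CommRing R] (l : Rˣ) : uu R l 1 0 = 0 := rfl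
lemma uu11 {R : Type} [CommRing R] (l : Rˣ) : uu R l 1 1 = (l⁻¹ : Rˣ) := rfl

def vv (R : Type) [CommRing R] (d : R) (l : Rˣ) : SL2 R :=
  ⟨!![(l : R), 0; d * (l - (l⁻¹ : Rˣ)), (l⁻¹ : Rˣ)], by simp [Matrix.det_fin_two]⟩

lemma vv00 {R : Type} [CommRing R] (d : R) (l : Rˣ) : vv R d l 0 0 = l := rfl
lemma vv01 {R : Type} [CommRing R] (d : R) (l : Rˣ) : vv R d l 0 1 = 0 := rfl
lemma vv10 {R : Type} [CommRing R] (d : R) (l : Rˣ) : vv R d l 1 0 = d * (l - (l⁻¹ : Rˣ)) := rfl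
lemma vv11 {R : Type} [CommRing R] (d : R) (l : Rˣ) : vv R d l 1 1 = (l⁻¹ : Rˣ) := rfl

lemma sl_ext {R : Type} [CommRing R] (M N : SL2 R) (h00 : M 0 0 = N 0 0) (h01 : M 0 1 = N 0 1)
    (h10 : M 1 0 = N 1 0) (h11 : M 1 1 = N 1 1) : M = N := by
  ext i j
  fin_cases i <;> fin_cases j <;> assumption

def UU (R : Type) [CommRing R] : Rˣ →* SL2 R where
  toFun := uu R
  map_one' := by apply sl_ext <;> simp [uu00, uu01, uu10, uu11]
  map_mul' l m := by
    apply sl_ext <;> simp only [sl_mul, uu00, uu01, uu10, uu11, mul_inv, Units.val_mul] <;> ring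

def VV (R : Type) [CommRing R] (d : R) : Rˣ →* SL2 R where
  toFun := vv R d
  map_one' := by apply sl_ext <;> simp [vv00, vv01, vv10, vv11]
  map_mul' l m := by
    apply sl_ext <;> simp only [sl_mul, vv00, vv01, vv10, vv11, mul_inv, Units.val_mul] <;> ring

lemma UU_apply {R : Type} [CommRing R] (l : Rˣ) : UU R l = uu R l := rfl
lemma VV_apply {R : Type} [CommRing R] (d : R) (l : Rˣ) : VV R d l = vv R d l := rfl

lemma wordEval_wordOf {G : Type} [Group G] {r : ℕ} (a b : Fin r → ℤ) (x y : G) :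
    wordEval (wordOf a b) x y = (List.ofFn fun i => x ^ a i * y ^ b i).prod := by
  unfold wordEval wordOf
  rw [map_list_prod, List.map_ofFn]
  congr 2
  funext i
  simp

/-- trace at d = 0 -/
lemma tri_prod (R : Type) [CommRing R] (L : List (Rˣ × Rˣ)) :
    ∀ N : SL2 R, N = (L.map fun t => UU R t.1 * VV R 0 t.2).prod →
    N 1 0 = 0 ∧ N 0 0 = ((L.map fun t => t.1 * t.2).prod : Rˣ) ∧
      N 1 1 = (((L.map fun t => t.1 * t.2).prod)⁻¹ : Rˣ) := by
  induction L with
  | nil => intro N hN; subst hN; simp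
  | cons t L ih =>
    intro N hN
    obtain ⟨h1, h2, h3⟩ := ih _ rfl
    rw [List.map_cons, List.prod_cons] at hN
    generalize (L.map fun t => UU R t.1 * VV R 0 t.2).prod = N' at *
    subst hN
    simp only [UU_apply, VV_apply, sl_mul, uu00, uu01, uu10, uu11, vv00, vv01, vv10, vv11, h1, h2, h3,
      List.map_cons, List.prod_cons, mul_inv, Units.val_mul]
    refine ⟨?_, ?_, ?_⟩ <;> ring

/-- leading coefficient -/
lemma lead_prod (K : Type) [Field K] (L : List (Kˣ × Kˣ)) :
    ∀ N : SL2 K[X], N = (L.map fun t =>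
      UU K[X] (Units.map (C : K →+* K[X]) t.1) * VV K[X] X (Units.map (C : K →+* K[X]) t.2)).prod →
    (∀ n, L.length < n → (N 0 0).coeff n = 0) ∧
    (N 0 0).coeff L.length = (L.map fun t => ((t.1 : K) - (t.1⁻¹ : Kˣ)) * (t.2 - (t.2⁻¹ : Kˣ))).prod ∧
    (∀ n, L.length < n → (N 1 0).coeff n = 0) ∧
    (∀ n, L.length ≤ n → (N 0 1).coeff n = 0) ∧
    (∀ n, L.length ≤ n → 1 ≤ n → (N 1 1).coeff n = 0) := by
  induction L with
  | nil =>
    intro N hN; subst hN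
    simp only [List.map_nil, List.prod_nil, List.length_nil]
    simp [coeff_one]
    constructor <;> intros <;> omega
  | cons t L ih =>
    intro N hN
    obtain ⟨h1, h2, h3, h4, h5⟩ := ih _ rfl
    rw [List.map_cons, List.prod_cons] at hN
    generalize (L.map fun t => UU K[X] (Units.map (C : K →+* K[X]) t.1) *
      VV K[X] X (Units.map (C : K →+* K[X]) t.2)).prod = N' at *
    obtain ⟨l, m⟩ := t
    have cu : ∀ z : Kˣ, ((Units.map (C : K →+* K[X]) z : K[X]ˣ) : K[X]) = C (z : K) := fun _ => rfl
    have e00 : N 0 0 = C ((l:K) * m) * N' 0 0 +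
        X * (C (((l : K) - (l⁻¹ : Kˣ)) * (m - (m⁻¹ : Kˣ))) * N' 0 0) +
        C (((l : K) - (l⁻¹ : Kˣ)) * (m⁻¹ : Kˣ)) * N' 1 0 := by
      subst hN
      simp only [UU_apply, VV_apply, sl_mul, uu00, uu01, uu10, uu11, vv00, vv01, vv10, vv11, cu, ← map_inv,
        map_mul, map_sub]
      ring
    have e01 : N 0 1 = C ((l:K) * m) * N' 0 1 +
        X * (C (((l : K) - (l⁻¹ : Kˣ)) * (m - (m⁻¹ : Kˣ))) * N' 0 1) +
        C (((l : K) - (l⁻¹ : Kˣ)) * (m⁻¹ : Kˣ)) * N' 1 1 := by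
      subst hN
      simp only [UU_apply, VV_apply, sl_mul, uu00, uu01, uu10, uu11, vv00, vv01, vv10, vv11, cu, ← map_inv,
        map_mul, map_sub]
      ring
    have e10 : N 1 0 = X * (C ((l⁻¹ : Kˣ) * (m - (m⁻¹ : Kˣ) : K)) * N' 0 0) +
        C (((l⁻¹ : Kˣ) : K) * (m⁻¹ : Kˣ)) * N' 1 0 := by
      subst hN
      simp only [UU_apply, VV_apply, sl_mul, uu00, uu01, uu10, uu11, vv00, vv01, vv10, vv11, cu, ← map_inv,
        map_mul, map_sub]
      ring
    have e11 : N 1 1 = X * (C ((l⁻¹ : Kˣ) * (m - (m⁻¹ : Kˣ) : K)) * N' 0 1) +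
        C (((l⁻¹ : Kˣ) : K) * (m⁻¹ : Kˣ)) * N' 1 1 := by
      subst hN
      simp only [UU_apply, VV_apply, sl_mul, uu00, uu01, uu10, uu11, vv00, vv01, vv10, vv11, cu, ← map_inv,
        map_mul, map_sub]
      ring
    rw [List.length_cons, List.map_cons, List.prod_cons]
    rw [e00, e01, e10, e11]
    refine ⟨?_, ?_, ?_, ?_, ?_⟩
    · rintro (_ | n) hn
      · omega
      · simp only [coeff_add, coeff_X_mul, coeff_C_mul]
        rw [h1 (n+1) (by omega), h1 n (by omega), h3 (n+1) (by omega)]; simp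
    · simp only [coeff_add, coeff_X_mul, coeff_C_mul]
      rw [h1 _ (by omega), h2, h3 _ (by omega)]; simp
    · rintro (_ | n) hn
      · omega
      · simp only [coeff_add, coeff_X_mul, coeff_C_mul]
        rw [h1 n (by omega), h3 (n+1) (by omega)]; simp
    · rintro (_ | n) hn
      · omega
      · simp only [coeff_add, coeff_X_mul, coeff_C_mul]
        rw [h4 (n+1) (by omega), h4 n (by omega), h5 (n+1) (by omega) (by omega)]; simp
    · rintro (_ | n) hn hn1
      · omega
      · simp only [coeff_add, coeff_X_mul, coeff_C_mul]
        rw [h4 n (by omega), h5 (n+1) (by omega) (by omega)]; simp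

/-- the trace identity in any `F_p`-algebra -/
lemma trace_dickson {r : ℕ} (a b : Fin r → ℤ) (p : ℕ)
    (f : MvPolynomial (Fin 3) ℤ) (hf : IsTracePolynomial (wordOf a b) f)
    (q : MvPolynomial (Fin 3) (ZMod p))
    (hdec : MvPolynomial.map (Int.castRingHom (ZMod p)) f =
      Polynomial.aeval q (Polynomial.dickson 1 (1 : ZMod p) r))
    (R : Type) [CommRing R] [Algebra (ZMod p) R] (x y : SL2 R) :
    Matrix.trace ((wordEval (wordOf a b) x y : SL2 R) : Matrix (Fin 2) (Fin 2) R) =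
      (dickson 1 (1 : R) r).eval (MvPolynomial.aeval (trPoint x y) q) := by
  rw [hf R x y]
  have h1 : Int.castRingHom R = (algebraMap (ZMod p) R).comp (Int.castRingHom (ZMod p)) :=
    RingHom.ext_int _ _
  rw [h1, ← MvPolynomial.map_map, hdec, MvPolynomial.eval_map, ← MvPolynomial.aeval_def]
  have h2 : dickson 1 (1 : R) r = (dickson 1 (1 : ZMod p) r).map (algebraMap (ZMod p) R) := by
    rw [map_dickson]; simp
  rw [h2, eval_map_algebraMap]
  exact (Polynomial.aeval_algHom_apply (MvPolynomial.aeval (trPoint x y)) q _).symm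



lemma zpow_sum_eq {G ι : Type} [CommGroup G] (s : Finset ι) (g : G) (a : ι → ℤ) :
    ∏ i ∈ s, g ^ a i = g ^ (∑ i ∈ s, a i) := by
  classical
  induction s using Finset.induction_on with
  | empty => simp
  | insert i s hi ih => rw [Finset.prod_insert hi, Finset.sum_insert hi, ih, _root_.zpow_add]

lemma tr_word {R : Type} [CommRing R] {r : ℕ} (a b : Fin r → ℤ) (l m : Rˣ) :
    Matrix.trace ((wordEval (wordOf a b) (UU R l) (VV R 0 m) : SL2 R) : Matrix (Fin 2) (Fin 2) R) =
      ((l ^ (∑ i, a i) * m ^ (∑ i, b i) : Rˣ) : R) +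
      ((l ^ (∑ i, a i) * m ^ (∑ i, b i) : Rˣ)⁻¹ : Rˣ) := by
  have hw := wordEval_wordOf a b (UU R l) (VV R 0 m)
  have h := tri_prod R (List.ofFn fun i => (l ^ a i, m ^ b i)) (wordEval (wordOf a b) (UU R l) (VV R 0 m)) (by
    rw [hw, List.map_ofFn]
    congr 2
    funext i
    simp [map_zpow])
  have e : ((List.ofFn fun i => (l ^ a i, m ^ b i)).map fun t => t.1 * t.2).prod =
      l ^ (∑ i, a i) * m ^ (∑ i, b i) := by
    rw [List.map_ofFn, List.prod_ofFn]
    simp only [Function.comp]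
    rw [Finset.prod_mul_distrib, zpow_sum_eq, zpow_sum_eq]
  rw [e] at h
  rw [Matrix.trace_fin_two, h.2.1, h.2.2]

lemma key {r : ℕ} (hr : 1 ≤ r) (a b : Fin r → ℤ) (p : ℕ)
    (f : MvPolynomial (Fin 3) ℤ) (hf : IsTracePolynomial (wordOf a b) f)
    (q : MvPolynomial (Fin 3) (ZMod p))
    (hdec : MvPolynomial.map (Int.castRingHom (ZMod p)) f =
      Polynomial.aeval q (Polynomial.dickson 1 (1 : ZMod p) r))
    (K : Type) [Field K] [Algebra (ZMod p) K] (l m : Kˣ)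
    (hne : ∏ i, (((l ^ a i : Kˣ) : K) - ((l ^ a i)⁻¹ : Kˣ)) * (((m ^ b i : Kˣ) : K) - ((m ^ b i)⁻¹ : Kˣ)) ≠ 0) :
    ∃ q0 q1 : K,
      (dickson 1 (1 : K) r).eval q0 = ((l ^ (∑ i, a i) * m ^ (∑ i, b i) : Kˣ) : K) +
      ((l ^ (∑ i, a i) * m ^ (∑ i, b i) : Kˣ)⁻¹ : Kˣ) ∧
      (dickson 1 (1 : K) r).eval q1 = ((l⁻¹ ^ (∑ i, a i) * m ^ (∑ i, b i) : Kˣ) : K) +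
      ((l⁻¹ ^ (∑ i, a i) * m ^ (∑ i, b i) : Kˣ)⁻¹ : Kˣ) ∧
      (q0 - q1) ^ r = ∏ i, (((l ^ a i : Kˣ) : K) - ((l ^ a i)⁻¹ : Kˣ)) * (((m ^ b i : Kˣ) : K) - ((m ^ b i)⁻¹ : Kˣ)) := by
  set q0 := MvPolynomial.aeval (trPoint (UU K l) (VV K 0 m)) q with hq0
  set q1 := MvPolynomial.aeval (trPoint (UU K l⁻¹) (VV K 0 m)) q with hq1
  refine ⟨q0, q1, ?_, ?_, ?_⟩
  · rw [hq0, ← trace_dickson a b p f hf q hdec, tr_word]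
  · rw [hq1, ← trace_dickson a b p f hf q hdec, tr_word]
  set cl := Units.map ((C : K →+* K[X]) : K →* K[X]) l with hcl
  set cm := Units.map ((C : K →+* K[X]) : K →* K[X]) m with hcm
  set Q := MvPolynomial.aeval (trPoint (UU K[X] cl) (VV K[X] X cm)) q with hQ
  have hev : ∀ d : K, Q.eval d = MvPolynomial.aeval (trPoint (UU K l) (VV K d m)) q := by
    intro d
    have h1 : Q.eval d = Polynomial.aeval d Q := by simp
    have h2 : (Polynomial.aeval d Q : K) =
        (((Polynomial.aeval d : K[X] →ₐ[K] K).restrictScalars (ZMod p)).comp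
          (MvPolynomial.aeval (trPoint (UU K[X] cl) (VV K[X] X cm)))) q := rfl
    rw [h1, h2, MvPolynomial.comp_aeval]
    congr 2
    have cu : ∀ z : Kˣ, ((Units.map ((C : K →+* K[X]) : K →* K[X]) z : K[X]ˣ) : K[X]) = C (z : K) := fun _ => rfl
    funext i
    fin_cases i <;>
    simp [trPoint, Matrix.trace_fin_two, sl_mul, -Matrix.SpecialLinearGroup.coe_mul, UU_apply, VV_apply, uu00, uu01, uu10, uu11, vv00, vv01, vv10, vv11, cu, ← map_inv, hcl, hcm, -Units.val_inv_eq_inv_val]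
  have e0 : Q.eval 0 = q0 := hev 0
  have e1 : Q.eval (-1) = q1 := by
    rw [hev, hq1]
    congr 2
    funext i
    fin_cases i <;>
    simp [trPoint, Matrix.trace_fin_two, sl_mul, -Matrix.SpecialLinearGroup.coe_mul, UU_apply, VV_apply, uu00, uu01, uu10, uu11, vv00, vv01, vv10, vv11, -Units.val_inv_eq_inv_val]
    · ring
    · ring
  have hF := trace_dickson a b p f hf q hdec K[X] (UU K[X] cl) (VV K[X] X cm)
  rw [← hQ] at hF
  have hcomp : (dickson 1 (1 : K[X]) r).eval Q = (dickson 1 (1 : K) r).comp Q := by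
    rw [Polynomial.comp, eval₂_eq_eval_map, map_dickson, map_one]
  rw [hcomp] at hF
  have hw := wordEval_wordOf a b (UU K[X] cl) (VV K[X] X cm)
  obtain ⟨h1, h2, -, -, h5⟩ := lead_prod K (List.ofFn fun i => (l ^ a i, m ^ b i))
    (wordEval (wordOf a b) (UU K[X] cl) (VV K[X] X cm)) (by
    rw [hw, List.map_ofFn]
    congr 2
    funext i
    simp only [Function.comp, map_zpow]
    rfl)
  rw [List.length_ofFn] at h1 h2 h5
  rw [List.map_ofFn, List.prod_ofFn] at h2
  simp only [Function.comp] at h2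
  rw [Matrix.trace_fin_two] at hF
  have hc1 : ((dickson 1 (1 : K) r).comp Q).coeff r = ∏ i, (((l ^ a i : Kˣ) : K) - ((l ^ a i)⁻¹ : Kˣ)) * (((m ^ b i : Kˣ) : K) - ((m ^ b i)⁻¹ : Kˣ)) := by
    rw [← hF, coeff_add, h2, h5 r le_rfl hr, add_zero]
  have hdeg : ((dickson 1 (1 : K) r).comp Q).natDegree = r := by
    apply le_antisymm
    · rw [natDegree_le_iff_coeff_eq_zero]
      intro n hn
      rw [← hF, coeff_add, h1 n hn, h5 n hn.le (by omega), add_zero]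
    · exact le_natDegree_of_ne_zero (by rw [hc1]; exact hne)
  have hQ1 : Q.natDegree = 1 := by
    rw [natDegree_comp, dk_natDegree K r hr] at hdeg
    have : r * Q.natDegree = r * 1 := by omega
    exact Nat.eq_of_mul_eq_mul_left (by omega) this
  have hlead := leadingCoeff_comp (p := dickson 1 (1 : K) r) (q := Q) (by omega)
  rw [leadingCoeff, hdeg, hc1, dk_leading K r hr, one_mul, dk_natDegree K r hr] at hlead
  rw [hlead, leadingCoeff, hQ1]
  congr 1
  have hQe := Polynomial.eq_X_add_C_of_natDegree_le_one hQ1.le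
  rw [← e0, ← e1, hQe]
  simp

lemma dk_root (k K : Type) [Field k] [Field K] [IsAlgClosed k] [Algebra k K] (r : ℕ) (hr : (r : k) ≠ 0)
    (m q : K) (hm : m ≠ 0)
    (h : (dickson 1 (1 : K) r).eval q = m ^ r + (m⁻¹) ^ r) :
    ∃ z : k, q = algebraMap k K z * m + (algebraMap k K z * m)⁻¹ := by
  let Om := AlgebraicClosure K
  obtain ⟨y, hy⟩ := IsAlgClosed.exists_root (k := Om) (X ^ 2 - C (algebraMap K Om q) * X + 1) (by
    have : (X ^ 2 - C (algebraMap K Om q) * X + 1 : Om[X]).degree = 2 := by compute_degree!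
    rw [this]; norm_num)
  have hy' : y ^ 2 - algebraMap K Om q * y + 1 = 0 := by simpa only [IsRoot, eval_add, eval_sub, eval_mul, eval_pow, eval_X, eval_C, eval_one] using hy
  have hy0 : y ≠ 0 := by rintro rfl; norm_num at hy'
  have hq : algebraMap K Om q = y + y⁻¹ := by 
    have h1 := mul_inv_cancel₀ hy0
    linear_combination (-y⁻¹) * hy' + (y - algebraMap K Om q) * h1
  set M := algebraMap K Om m with hM
  have hM0 : M ≠ 0 := by simpa [hM] using hm
  have hD : y ^ r + (y⁻¹) ^ r = M ^ r + (M⁻¹) ^ r := by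
    rw [← dickson_one_one_eval_add_inv y y⁻¹ (mul_inv_cancel₀ hy0), ← hq]
    have := congrArg (algebraMap K Om) h
    rw [← eval_map_apply, map_dickson, map_one] at this
    rw [this]; simp [hM]
  have hy2 : (y ^ r - M ^ r) * (y ^ r * M ^ r - 1) = 0 := by
    have h1 : y ^ r * (y⁻¹) ^ r = 1 := by rw [← mul_pow, mul_inv_cancel₀ hy0, one_pow]
    have h2 : M ^ r * (M⁻¹) ^ r = 1 := by rw [← mul_pow, mul_inv_cancel₀ hM0, one_pow]
    linear_combination y ^ r * M ^ r * hD - M ^ r * h1 + y ^ r * h2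
  have : NeZero (r : k) := ⟨hr⟩
  have hr0 : r ≠ 0 := by rintro rfl; simp at hr
  have : NeZero r := ⟨hr0⟩
  obtain ⟨ζ, hζ⟩ := HasEnoughRootsOfUnity.exists_primitiveRoot k r
  have hζ' : IsPrimitiveRoot (algebraMap K Om (algebraMap k K ζ)) r :=
    (hζ.map_of_injective (algebraMap k K).injective).map_of_injective (algebraMap K Om).injective
  have fin : ∀ z : Om, z ≠ 0 → algebraMap K Om q = z + z⁻¹ → z ^ r = M ^ r →
      ∃ z : k, q = algebraMap k K z * m + (algebraMap k K z * m)⁻¹ := by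
    intro z hz hqz hzr
    obtain ⟨i, -, hi⟩ := hζ'.eq_pow_of_pow_eq_one (ξ := z / M) (by
      rw [div_pow, hzr, div_self (pow_ne_zero _ hM0)])
    refine ⟨ζ ^ i, (algebraMap K Om).injective ?_⟩
    have : algebraMap K Om (algebraMap k K (ζ ^ i)) * M = z := by
      rw [map_pow, map_pow, hi, div_mul_cancel₀ _ hM0]
    rw [map_add, map_inv₀, map_mul, ← hM, this, hqz]
  rcases mul_eq_zero.1 hy2 with h1 | h1
  · exact fin y hy0 hq (sub_eq_zero.1 h1)
  · refine fin y⁻¹ (inv_ne_zero hy0) (by rw [hq, inv_inv, add_comm]) ?_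
    rw [inv_pow]
    exact inv_eq_of_mul_eq_one_right (sub_eq_zero.1 h1)

lemma prod_low (k : Type) [Field k] {ι : Type} [DecidableEq ι] (s : Finset ι) (e : ι → ℕ) (n : ℕ) (hn : 1 ≤ n)
    (he : ∀ i ∈ s, n ≤ e i) :
    ∃ g : k[X], ∏ i ∈ s, (1 - X ^ (e i) : k[X]) =
      1 - C ((s.filter fun i => e i = n).card : k) * X ^ n + X ^ (n + 1) * g := by
  induction s using Finset.induction_on with
  | empty => exact ⟨0, by simp⟩
  | insert i s hi ih =>
    obtain ⟨g, hg⟩ := ih fun j hj => he j (Finset.mem_insert_of_mem hj)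
    rw [Finset.prod_insert hi, hg, Finset.filter_insert]
    obtain ⟨t, rfl⟩ : ∃ t, n = t + 1 := ⟨n - 1, by omega⟩
    set c := (s.filter fun i => e i = t + 1).card with hc
    split_ifs with h
    · rw [Finset.card_insert_of_notMem (by simp [hi]), h, ← hc]
      refine ⟨g + X ^ t * C (c : k) - X ^ (t + 1) * g, ?_⟩
      push_cast
      rw [map_add, map_one]
      ring
    · obtain ⟨u, hu⟩ : ∃ u, e i = t + 2 + u :=
        ⟨e i - (t + 2), by have := he i (Finset.mem_insert_self _ _); omega⟩
      refine ⟨g - X ^ u * (1 - C (c : k) * X ^ (t + 1) + X ^ (t + 1 + 1) * g), ?_⟩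
      rw [hu]
      ring

lemma poly_final (k : Type) [Field k] (p : ℕ) [CharP k p] {r : ℕ} (hr : 1 ≤ r) (hrp : r < p)
    (n : Fin r → ℕ) (hn : ∀ i, 1 ≤ n i) (N : ℕ) (hN : N ≤ ∑ i, n i) (d1 d2 e : k) (he : e ≠ 0)
    (h : X ^ (r * (∑ i, n i - N)) * (C d1 * X ^ (2 * N) + C d2) ^ r =
      C e * ∏ i, (1 - X ^ (2 * r * n i) : k[X])) :
    N = ∑ i, n i ∧ ∀ i, r * n i = N := by
  have i0 : Fin r := ⟨0, hr⟩
  have hNS : N = ∑ i, n i := by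
    by_contra hne
    have h0 := congrArg (Polynomial.eval 0) h
    rw [eval_mul, eval_pow, eval_X, zero_pow, zero_mul, eval_mul, eval_C, eval_prod] at h0
    · rw [Finset.prod_eq_one, mul_one] at h0
      · exact he h0.symm
      · intro i _
        have : 2 * r * n i ≠ 0 := by
          have := hn i; positivity
        simp [this]
    · have : ∑ i, n i - N ≠ 0 := by omega
      positivity
  refine ⟨hNS, ?_⟩
  have hNpos : 0 < N := by
    rw [hNS]
    exact lt_of_lt_of_le (hn i0) (Finset.single_le_sum (f := n) (fun _ _ => Nat.zero_le _) (Finset.mem_univ i0))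
  obtain ⟨j, -, hj⟩ := Finset.exists_min_image Finset.univ n ⟨i0, Finset.mem_univ _⟩
  have hj1 : 1 ≤ 2 * r * n j := by have := hn j; exact Nat.mul_pos (by omega) this
  obtain ⟨g, hg⟩ := prod_low k Finset.univ (fun i => 2 * r * n i) (2 * r * n j) hj1
    (fun i hi => Nat.mul_le_mul_left _ (hj i hi))
  rw [← hNS, Nat.sub_self, mul_zero, pow_zero, one_mul, hg] at h
  have hexp : (C d1 * X ^ (2 * N) + C d2) ^ r = expand k (2 * N) ((C d1 * X + C d2) ^ r) := by
    simp
  rw [hexp] at h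
  have hco := congrArg (fun P => coeff P (2 * r * n j)) h
  rw [coeff_expand (by omega)] at hco
  set c := (Finset.univ.filter fun i => 2 * r * n i = 2 * r * n j).card with hc
  have hcpos : 0 < c := Finset.card_pos.2 ⟨j, by simp⟩
  have hcr : c ≤ r := 
    (Finset.card_filter_le (Finset.univ : Finset (Fin r)) (fun i => 2 * r * n i = 2 * r * n j)).trans
      (by simp)
  have hck : (c : k) ≠ 0 := by
    rw [Ne, CharP.cast_eq_zero_iff k p]
    intro hd
    have := Nat.le_of_dvd hcpos hd
    omega
  have hR : (C e * (1 - C (c : k) * X ^ (2 * r * n j) + X ^ (2 * r * n j + 1) * g)).coeff (2 * r * n j) = e * (-c) := by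
    rw [coeff_C_mul, coeff_add, coeff_sub, coeff_one, coeff_C_mul_X_pow, if_neg (by omega), if_pos rfl,
      coeff_X_pow_mul', if_neg (by omega)]
    ring
  rw [hR] at hco
  have hdvd : 2 * N ∣ 2 * r * n j := by
    by_contra hnd
    rw [if_neg hnd] at hco
    exact mul_ne_zero he (neg_ne_zero.2 hck) hco.symm
  have hle : N ≤ r * n j := by
    have := Nat.le_of_dvd (by omega) hdvd
    rw [mul_assoc] at this
    omega
  have hsum : ∑ i : Fin r, n j = ∑ i, n i := by
    apply le_antisymm
    · exact Finset.sum_le_sum fun i hi => hj i hi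
    · rw [← hNS]; simpa using hle
  have hall := (Finset.sum_eq_sum_iff_of_le fun i hi => hj i hi).1 hsum
  intro i
  rw [← hall i (Finset.mem_univ i), hNS, ← hsum]
  simp

lemma zflip {K : Type} [Field K] (z : K) (hz : z ≠ 0) (r : ℕ) (a : ℤ) :
    ∃ δ : ℤˣ, z ^ (r * a.natAbs) * (z ^ ((r : ℤ) * a) - (z ^ ((r : ℤ) * a))⁻¹) =
      ((δ : ℤ) : K) * (1 - z ^ (2 * r * a.natAbs)) := by
  obtain ⟨n, rfl | rfl⟩ := a.eq_nat_or_neg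
  · refine ⟨-1, ?_⟩
    have : z ^ ((r : ℤ) * n) = z ^ (r * n) := by rw [← zpow_natCast]; push_cast; rfl
    rw [this, Int.natAbs_natCast, mul_assoc 2, two_mul, pow_add]
    have : z ^ (r * n) ≠ 0 := pow_ne_zero _ hz
    field_simp
    push_cast
    ring
  · refine ⟨1, ?_⟩
    have : z ^ ((r : ℤ) * -(n : ℤ)) = (z ^ (r * n))⁻¹ := by
      rw [← zpow_natCast, ← _root_.zpow_neg]; push_cast; congr 1; ring
    rw [this, Int.natAbs_neg, Int.natAbs_natCast, mul_assoc 2, two_mul, pow_add]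
    have : z ^ (r * n) ≠ 0 := pow_ne_zero _ hz
    field_simp
    push_cast
    ring

lemma zflip2 {k K : Type} [Field k] [Field K] [Algebra k K] (z : K) (hz : z ≠ 0) (A : ℤ) (c1 c2 : k) :
    ∃ d1 d2 : k, z ^ A.natAbs * (algebraMap k K c1 * z ^ A + algebraMap k K c2 * (z ^ A)⁻¹) =
      algebraMap k K d1 * z ^ (2 * A.natAbs) + algebraMap k K d2 := by
  obtain ⟨n, rfl | rfl⟩ := A.eq_nat_or_neg
  · refine ⟨c1, c2, ?_⟩
    have : z ^ n ≠ 0 := pow_ne_zero _ hz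
    rw [Int.natAbs_natCast, two_mul, pow_add, zpow_natCast]
    field_simp
  · refine ⟨c2, c1, ?_⟩
    have : z ^ n ≠ 0 := pow_ne_zero _ hz
    rw [Int.natAbs_neg, Int.natAbs_natCast, two_mul, pow_add, _root_.zpow_neg, zpow_natCast]
    field_simp
    ring

lemma uni_final (k : Type) [Field k] (p : ℕ) [CharP k p] {r : ℕ} (hr : 1 ≤ r) (hrp : r < p)
    (a : Fin r → ℤ) (ha : ∀ i, a i ≠ 0) (A : ℤ) (hA : A = ∑ i, a i) (c1 c2 e : k) (he : e ≠ 0)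
    (h : (algebraMap k (RatFunc k) c1 * RatFunc.X ^ A + algebraMap k (RatFunc k) c2 * (RatFunc.X ^ A)⁻¹) ^ r =
      algebraMap k (RatFunc k) e *
        ∏ i, (RatFunc.X ^ ((r : ℤ) * a i) - (RatFunc.X ^ ((r : ℤ) * a i))⁻¹ : RatFunc k)) :
    ∀ i, (r : ℤ) * a i = A := by
  have hX : (RatFunc.X : RatFunc k) ≠ 0 := RatFunc.X_ne_zero
  obtain ⟨d1, d2, hd⟩ := zflip2 (RatFunc.X : RatFunc k) hX A c1 c2
  choose δ hδ using fun i => zflip (RatFunc.X : RatFunc k) hX r (a i)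
  set S := ∑ i, (a i).natAbs with hS
  set N := A.natAbs with hN
  have hNS : N ≤ S := by
    rw [hN, hA, hS]; exact Int.natAbs_sum_le _ _
  set ε : k := ∏ i, (((δ i : ℤˣ) : ℤ) : k) with hε
  have hε0 : ε ≠ 0 := by
    rw [hε, Finset.prod_ne_zero_iff]
    intro i _
    rcases Int.units_eq_one_or (δ i) with h | h <;> simp [h]
  have hp1 : (RatFunc.X : RatFunc k) ^ (r * S) *
      ∏ i, (RatFunc.X ^ ((r : ℤ) * a i) - (RatFunc.X ^ ((r : ℤ) * a i))⁻¹ : RatFunc k) =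
      algebraMap k (RatFunc k) ε * ∏ i, (1 - RatFunc.X ^ (2 * r * (a i).natAbs)) := by
    rw [hS, Finset.mul_sum, ← Finset.prod_pow_eq_pow_sum, ← Finset.prod_mul_distrib,
      Finset.prod_congr rfl fun i _ => hδ i, Finset.prod_mul_distrib, hε, map_prod]
    simp
  have hmain : (RatFunc.X : RatFunc k) ^ (r * (S - N)) *
      (algebraMap k (RatFunc k) d1 * RatFunc.X ^ (2 * N) + algebraMap k (RatFunc k) d2) ^ r =
      algebraMap k (RatFunc k) (e * ε) * ∏ i, (1 - RatFunc.X ^ (2 * r * (a i).natAbs)) := by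
    rw [map_mul, mul_assoc, ← hp1, ← hd, mul_pow, h, ← mul_assoc, ← pow_mul, ← pow_add]
    have : r * (S - N) + N * r = r * S := by
      rw [mul_comm N r, ← mul_add]; congr 1; omega
    rw [this]; ring
  have hpoly : X ^ (r * (S - N)) * (C d1 * X ^ (2 * N) + C d2) ^ r =
      C (e * ε) * ∏ i, (1 - X ^ (2 * r * (a i).natAbs) : k[X]) := by
    apply RatFunc.algebraMap_injective k
    have hc : ∀ c : k, algebraMap k[X] (RatFunc k) (C c) = algebraMap k (RatFunc k) c := fun c => by
      rw [RatFunc.algebraMap_C, RatFunc.algebraMap_eq_C]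
    simp only [map_mul, map_pow, map_add, map_prod, map_sub, map_one, RatFunc.algebraMap_X]
    simpa [hc, RatFunc.algebraMap_eq_C] using hmain
  obtain ⟨h1, h2⟩ := poly_final k p hr hrp (fun i => (a i).natAbs)
    (fun i => Int.natAbs_pos.2 (ha i)) N hNS d1 d2 (e * ε) (mul_ne_zero he hε0) hpoly
  have hall : ∀ i, (r : ℤ) * |a i| = |A| := fun i => by
    have := h2 i
    rw [Int.abs_eq_natAbs, Int.abs_eq_natAbs]; exact_mod_cast this
  have habs : |∑ i, a i| = ∑ i, |a i| := by
    rw [← hA, Int.abs_eq_natAbs, ← hN, h1]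
    push_cast
    exact Finset.sum_congr rfl fun i _ => by rw [Int.abs_eq_natAbs]
  intro i
  rcases le_total 0 A with hA0 | hA0
  · have : ∑ i, a i = ∑ i, |a i| := by rw [← habs, abs_of_nonneg (hA ▸ hA0)]
    have := (Finset.sum_eq_sum_iff_of_le fun i _ => le_abs_self (a i)).1 this i (Finset.mem_univ i)
    rw [this, hall i, abs_of_nonneg hA0]
  · have : ∑ i, -a i = ∑ i, |a i| := by
      rw [← habs, abs_of_nonpos (hA ▸ hA0), Finset.sum_neg_distrib]
    have := (Finset.sum_eq_sum_iff_of_le fun i _ => neg_le_abs (a i)).1 this i (Finset.mem_univ i)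
    have h3 := hall i
    rw [← this, abs_of_nonpos hA0] at h3
    linarith

lemma gam {r : ℕ} (hr : 1 ≤ r) (a b : Fin r → ℤ) (p : ℕ)
    (f : MvPolynomial (Fin 3) ℤ) (hf : IsTracePolynomial (wordOf a b) f)
    (q : MvPolynomial (Fin 3) (ZMod p))
    (hdec : MvPolynomial.map (Int.castRingHom (ZMod p)) f =
      Polynomial.aeval q (Polynomial.dickson 1 (1 : ZMod p) r))
    (k K : Type) [Field k] [IsAlgClosed k] (hrk : (r : k) ≠ 0)
    [Field K] [Algebra (ZMod p) K] [Algebra k K] (x y : K) (hx : x ≠ 0) (hy : y ≠ 0)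
    (hne : (∏ i, (x ^ ((r : ℤ) * a i) - (x ^ ((r : ℤ) * a i))⁻¹)) *
      ∏ i, (y ^ ((r : ℤ) * b i) - (y ^ ((r : ℤ) * b i))⁻¹) ≠ 0) :
    ∃ z0 z1 : k,
      (algebraMap k K z0 * (x ^ (∑ i, a i) * y ^ (∑ i, b i)) +
        (algebraMap k K z0 * (x ^ (∑ i, a i) * y ^ (∑ i, b i)))⁻¹ -
       (algebraMap k K z1 * ((x ^ (∑ i, a i))⁻¹ * y ^ (∑ i, b i)) +
        (algebraMap k K z1 * ((x ^ (∑ i, a i))⁻¹ * y ^ (∑ i, b i)))⁻¹)) ^ r =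
      (∏ i, (x ^ ((r : ℤ) * a i) - (x ^ ((r : ℤ) * a i))⁻¹)) *
      ∏ i, (y ^ ((r : ℤ) * b i) - (y ^ ((r : ℤ) * b i))⁻¹) := by
  have hl : ∀ (z : K) (hz : z ≠ 0) (n : ℤ), (((Units.mk0 z hz ^ r) ^ n : Kˣ) : K) = z ^ ((r : ℤ) * n) := by
    intro z hz n
    rw [Units.val_zpow_eq_zpow_val, Units.val_pow_eq_pow_val, Units.val_mk0, ← zpow_natCast, ← _root_.zpow_mul]
  have hl2 : ∀ (z : K) (n : ℤ), z ^ ((r : ℤ) * n) = (z ^ n) ^ r := by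
    intro z n
    rw [mul_comm, _root_.zpow_mul, zpow_natCast]
  have hP : ∏ i, (((((Units.mk0 x hx ^ r) ^ a i : Kˣ) : K) - (((Units.mk0 x hx ^ r) ^ a i)⁻¹ : Kˣ)) *
      ((((Units.mk0 y hy ^ r) ^ b i : Kˣ) : K) - (((Units.mk0 y hy ^ r) ^ b i)⁻¹ : Kˣ))) =
      (∏ i, (x ^ ((r : ℤ) * a i) - (x ^ ((r : ℤ) * a i))⁻¹)) *
      ∏ i, (y ^ ((r : ℤ) * b i) - (y ^ ((r : ℤ) * b i))⁻¹) := by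
    rw [← Finset.prod_mul_distrib]
    refine Finset.prod_congr rfl fun i _ => ?_
    rw [Units.val_inv_eq_inv_val, Units.val_inv_eq_inv_val, hl, hl]
  obtain ⟨q0, q1, h0, h1, h2⟩ := key hr a b p f hf q hdec K (Units.mk0 x hx ^ r) (Units.mk0 y hy ^ r)
    (by rw [hP]; exact hne)
  rw [hP] at h2
  rw [Units.val_inv_eq_inv_val, Units.val_mul, hl, hl, hl2, hl2, ← mul_pow, ← inv_pow] at h0
  rw [_root_.inv_zpow, Units.val_inv_eq_inv_val, Units.val_mul, Units.val_inv_eq_inv_val, hl, hl, hl2, hl2,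
    ← inv_pow, ← mul_pow, ← inv_pow] at h1
  have hxA : x ^ (∑ i, a i) ≠ 0 := zpow_ne_zero _ hx
  have hyB : y ^ (∑ i, b i) ≠ 0 := zpow_ne_zero _ hy
  obtain ⟨z0, hz0⟩ := dk_root k K r hrk _ q0 (mul_ne_zero hxA hyB) h0
  obtain ⟨z1, hz1⟩ := dk_root k K r hrk _ q1 (mul_ne_zero (inv_ne_zero hxA) hyB) h1
  exact ⟨z0, z1, by rw [← hz0, ← hz1, h2]⟩

lemma zne {K : Type} [Field K] (z : K) (hz : z ≠ 0) (r : ℕ) (a : ℤ) (h : z ^ (2 * r * a.natAbs) ≠ 1) :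
    z ^ ((r : ℤ) * a) - (z ^ ((r : ℤ) * a))⁻¹ ≠ 0 := by
  intro h0
  obtain ⟨δ, hδ⟩ := zflip z hz r a
  rw [h0, mul_zero] at hδ
  rcases Int.units_eq_one_or δ with h' | h' <;> simp [h'] at hδ <;>
  · apply h
    first | linear_combination hδ | linear_combination -hδ

lemma exists_good (k : Type) [Field k] [Infinite k] {r : ℕ} (hr : 1 ≤ r) (b : Fin r → ℤ) (hb : ∀ i, b i ≠ 0) :
    ∃ z : k, z ≠ 0 ∧ ∏ i, (z ^ ((r : ℤ) * b i) - (z ^ ((r : ℤ) * b i))⁻¹) ≠ 0 := by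
  classical
  set P : k[X] := X * ∏ i, (X ^ (2 * r * (b i).natAbs) - C 1) with hP
  have hP0 : P ≠ 0 := by
    refine mul_ne_zero X_ne_zero (Finset.prod_ne_zero_iff.2 fun i _ => X_pow_sub_C_ne_zero ?_ 1)
    exact Nat.mul_pos (by omega) (Int.natAbs_pos.2 (hb i))
  obtain ⟨z, hz⟩ := Infinite.exists_notMem_finset P.roots.toFinset
  have hz' : P.eval z ≠ 0 := by
    intro h; apply hz; rw [Multiset.mem_toFinset, mem_roots hP0]; exact h
  rw [hP, eval_mul, eval_X, eval_prod] at hz'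
  have hz0 := left_ne_zero_of_mul hz'
  refine ⟨z, hz0, Finset.prod_ne_zero_iff.2 fun i hi => zne z hz0 r _ ?_⟩
  have := Finset.prod_ne_zero_iff.1 (right_ne_zero_of_mul hz') i hi
  rw [eval_sub, eval_pow, eval_X, eval_C] at this
  exact sub_ne_zero.1 this

lemma ratX_ne (k : Type) [Field k] {r : ℕ} (hr : 1 ≤ r) (b : Fin r → ℤ) (hb : ∀ i, b i ≠ 0) :
    ∏ i, ((RatFunc.X : RatFunc k) ^ ((r : ℤ) * b i) - (RatFunc.X ^ ((r : ℤ) * b i))⁻¹) ≠ 0 := by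
  refine Finset.prod_ne_zero_iff.2 fun i hi => zne _ RatFunc.X_ne_zero r _ ?_
  intro h
  have hn : 2 * r * (b i).natAbs ≠ 0 := by
    have := Nat.mul_pos (show 0 < 2 * r by omega) (Int.natAbs_pos.2 (hb i)); omega
  have h2 : (X ^ (2 * r * (b i).natAbs) : k[X]) = 1 := by
    apply RatFunc.algebraMap_injective k
    rw [map_pow, RatFunc.algebraMap_X, map_one, h]
  have := congrArg (Polynomial.eval 0) h2
  simp [hn] at this

lemma main_aux {r : ℕ} (hr : 1 ≤ r) (a b : Fin r → ℤ) (hab : ∀ i, a i ≠ 0 ∧ b i ≠ 0)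
    (p : ℕ) (hp : p.Prime) (hpr : r < p)
    (f : MvPolynomial (Fin 3) ℤ) (hf : IsTracePolynomial (wordOf a b) f)
    (q : MvPolynomial (Fin 3) (ZMod p))
    (hdec : MvPolynomial.map (Int.castRingHom (ZMod p)) f =
      Polynomial.aeval q (Polynomial.dickson 1 (1 : ZMod p) r)) :
    (∀ i, (r : ℤ) * a i = ∑ i, a i) ∧ (∀ i, (r : ℤ) * b i = ∑ i, b i) := by
  have : Fact p.Prime := ⟨hp⟩
  let k := AlgebraicClosure (ZMod p)
  have hch : CharP k p := charP_of_injective_algebraMap (algebraMap (ZMod p) k).injective p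
  have hinf : Infinite k := IsAlgClosed.instInfinite
  have hrk : (r : k) ≠ 0 := by
    rw [Ne, CharP.cast_eq_zero_iff k p]
    intro hd
    have := Nat.le_of_dvd hr hd
    omega
  let _ : Algebra (ZMod p) (RatFunc k) := ((algebraMap k (RatFunc k)).comp (algebraMap (ZMod p) k)).toAlgebra
  have hXne : (RatFunc.X : RatFunc k) ≠ 0 := RatFunc.X_ne_zero
  have hmap : ∀ (c : Fin r → ℤ) (z : k),
      ∏ i, (algebraMap k (RatFunc k) z ^ ((r : ℤ) * c i) - (algebraMap k (RatFunc k) z ^ ((r : ℤ) * c i))⁻¹) =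
      algebraMap k (RatFunc k) (∏ i, (z ^ ((r : ℤ) * c i) - (z ^ ((r : ℤ) * c i))⁻¹)) := by
    intro c z
    simp only [map_prod, map_sub, map_inv₀, map_zpow₀]
  have hinj : ∀ z : k, z ≠ 0 → algebraMap k (RatFunc k) z ≠ 0 := fun z hz => by simpa using hz
  constructor
  · obtain ⟨ρ, hρ, hρ'⟩ := exists_good k hr b fun i => (hab i).2
    obtain ⟨z0, z1, h⟩ := gam hr a b p f hf q hdec k (RatFunc k) hrk RatFunc.X (algebraMap k (RatFunc k) ρ) hXne (hinj _ hρ)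
      (mul_ne_zero (ratX_ne k hr a fun i => (hab i).1) (by rw [hmap]; exact hinj _ hρ'))
    rw [hmap, mul_comm (∏ i, _)] at h
    refine uni_final k p hr hpr a (fun i => (hab i).1) _ rfl
      (z0 * ρ ^ (∑ i, b i) - (z1 * ρ ^ (∑ i, b i))⁻¹) ((z0 * ρ ^ (∑ i, b i))⁻¹ - z1 * ρ ^ (∑ i, b i)) _ hρ' ?_
    rw [← h]
    congr 1
    simp only [map_sub, map_inv₀, map_mul, map_zpow₀, mul_inv, inv_inv]
    ring
  · obtain ⟨ρ, hρ, hρ'⟩ := exists_good k hr a fun i => (hab i).1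
    obtain ⟨z0, z1, h⟩ := gam hr a b p f hf q hdec k (RatFunc k) hrk (algebraMap k (RatFunc k) ρ) RatFunc.X (hinj _ hρ) hXne
      (mul_ne_zero (by rw [hmap]; exact hinj _ hρ') (ratX_ne k hr b fun i => (hab i).2))
    rw [hmap] at h
    refine uni_final k p hr hpr b (fun i => (hab i).2) _ rfl
      (z0 * ρ ^ (∑ i, a i) - z1 * (ρ ^ (∑ i, a i))⁻¹)
      ((z0 * ρ ^ (∑ i, a i))⁻¹ - (z1 * (ρ ^ (∑ i, a i))⁻¹)⁻¹) _ hρ' ?_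
    rw [← h]
    congr 1
    simp only [map_sub, map_inv₀, map_mul, map_zpow₀, mul_inv, inv_inv]
    ring

end helpers

theorem word_eq_power_of_dickson_decomposition_modp {r : ℕ} (hr : 2 ≤ r)
    (a b : Fin r → ℤ) (hab : ∀ i, a i ≠ 0 ∧ b i ≠ 0)
    (A B : ℤ) (hA : A = ∑ i, a i) (hB : B = ∑ i, b i) (hAB : A ≠ 0 ∨ B ≠ 0)
    (p : ℕ) (hp : p.Prime) (hpr : r < p)
    (f : MvPolynomial (Fin 3) ℤ) (hf : IsTracePolynomial (wordOf a b) f)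
    (q : MvPolynomial (Fin 3) (ZMod p))
    (hdec : MvPolynomial.map (Int.castRingHom (ZMod p)) f =
      Polynomial.aeval q (Polynomial.dickson 1 (1 : ZMod p) r)) :
    (r : ℤ) ∣ A ∧ (r : ℤ) ∣ B ∧ ∀ i, a i = A / r ∧ b i = B / r := by
  obtain ⟨h1, h2⟩ := main_aux (by omega) a b hab p hp hpr f hf q hdec
  rw [← hA] at h1
  rw [← hB] at h2
  have hr0 : (r : ℤ) ≠ 0 := by omega
  refine ⟨⟨_, (h1 ⟨0, by omega⟩).symm⟩, ⟨_, (h2 ⟨0, by omega⟩).symm⟩, fun i => ⟨?_, ?_⟩⟩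
  · rw [← h1 i, Int.mul_ediv_cancel_left _ hr0]
  · rw [← h2 i, Int.mul_ediv_cancel_left _ hr0]
end
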